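/- arXiv:1407.5291 — 2 statements merged into one kernel-verified Lean document; each statement's English description precedes it below -/
import Mathlib

section
/- Let s ≥ 2 be an integer and let g be a positive function on the positive integers satisfying g(z) = o(z) as z → ∞. Then, as z tends to infinity through the integers, the sum over all s-tuples of integers with g(z) ≤ x_s < x_{s-1} < ⋯ < x_1 and x_1 + ⋯ + x_s = z of (x_1 ⋯ x_s)^{-1+1/s} converges to s^s · λ_s. -/
open Finset Filter

/-- `λ_s = Γ(1/s)^s / (s^s · s!)`. -/
noncomputable def lambdaS (s : ℕ) : ℝ :=
  (Real.Gamma (1 / s)) ^ s / ((s : ℝ) ^ s * (Nat.factorial s))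

/-!
Let `t i > 0` with `∑ i, t i = 1`; the theorem is the case `t i = 1 / s`. Comparing coefficients in
`∏ i, (1 - X) ^ (-t i) = (1 - X)⁻¹` shows that the weights `∏ i, multichoose (t i) (x i)` form a
probability distribution on the tuples with sum `z`. Under it, tuples with a coordinate that is
`o(z)` and tuples with two equal coordinates have mass tending to `0`. Since
`n ^ (t - 1) / multichoose t n → Γ(t)` (Euler's limit formula), the sum of `∏ i, x i ^ (t i - 1)`
is the mean of a bounded function that converges to `∏ i, Γ(t i)` in probability. Restricting to
strictly decreasing tuples divides the limit by `s!`.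
-/

open scoped Topology

section Multichoose

section Field

variable {K : Type*} [Field K] [CharZero K] [BinomialRing K]

theorem multichoose_eq_prod_range_div_factorial (t : K) (n : ℕ) :
    Ring.multichoose t n = (∏ i ∈ range n, (t + i)) / n.factorial := by
  have heval : (ascPochhammer K n).eval t = ∏ i ∈ range n, (t + i) := by
    induction n with
    | zero => simp
    | succ n ih => rw [ascPochhammer_succ_eval, ih, prod_range_succ]
  rw [eq_div_iff (by exact_mod_cast n.factorial_ne_zero), mul_comm, ← nsmul_eq_mul,
    Ring.factorial_nsmul_multichoose_eq_ascPochhammer, Polynomial.ascPochhammer_smeval_eq_eval,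
    heval]

theorem multichoose_succ_eq_mul_div (t : K) (n : ℕ) :
    Ring.multichoose t (n + 1) = Ring.multichoose t n * ((t + n) / (n + 1)) := by
  rw [multichoose_eq_prod_range_div_factorial, multichoose_eq_prod_range_div_factorial,
    prod_range_succ, Nat.factorial_succ, mul_comm (n + 1), Nat.cast_mul, Nat.cast_succ,
    mul_div_mul_comm]

end Field

section OrderedField

variable {K : Type*} [Field K] [LinearOrder K] [IsStrictOrderedRing K] [BinomialRing K] {t : K}

theorem multichoose_pos (ht : 0 < t) (n : ℕ) : 0 < Ring.multichoose t n := by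
  rw [multichoose_eq_prod_range_div_factorial]
  positivity

theorem antitone_multichoose (ht : 0 < t) (ht' : t ≤ 1) : Antitone (Ring.multichoose t) := by
  refine antitone_nat_of_succ_le fun n => ?_
  rw [multichoose_succ_eq_mul_div]
  refine mul_le_of_le_one_right (multichoose_pos ht n).le ?_
  rw [div_le_one (by positivity), add_comm]
  gcongr

end OrderedField

section PowerSeries

variable {R : Type*} [CommRing R] [BinomialRing R]

/-- The formal power series of `(1 - X) ^ (-t)`, given by its coefficients. Its multiplicativity in
`t` encodes the convolution identities for `Ring.multichoose`. -/
noncomputable def multichooseSeries (t : R) : PowerSeries R :=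
  PowerSeries.mk (Ring.multichoose t)

theorem multichooseSeries_eq_rescale_binomialSeries (t : R) :
    multichooseSeries t = PowerSeries.rescale (-1) (PowerSeries.binomialSeries R (-t)) := by
  ext n
  rw [multichooseSeries, PowerSeries.coeff_mk, PowerSeries.coeff_rescale,
    PowerSeries.binomialSeries_coeff, Ring.choose_neg', ← Int.cast_negOnePow_natCast]
  rcases Int.even_or_odd n with hn | hn <;> simp [hn, Int.negOnePow_even, Int.negOnePow_odd]

theorem multichooseSeries_zero : multichooseSeries (0 : R) = 1 := by
  simp [multichooseSeries_eq_rescale_binomialSeries]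

theorem multichooseSeries_add (t u : R) :
    multichooseSeries (t + u) = multichooseSeries t * multichooseSeries u := by
  simp only [multichooseSeries_eq_rescale_binomialSeries, neg_add,
    PowerSeries.binomialSeries_add, map_mul]

theorem multichooseSeries_sum {ι : Type*} (s : Finset ι) (t : ι → R) :
    multichooseSeries (∑ i ∈ s, t i) = ∏ i ∈ s, multichooseSeries (t i) := by
  classical
  induction s using Finset.induction_on with
  | empty => simp [multichooseSeries_zero]
  | insert i s hi ih => rw [sum_insert hi, prod_insert hi, multichooseSeries_add, ih]

theorem sum_range_ring_multichoose (t : R) (n : ℕ) :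
    ∑ m ∈ range (n + 1), Ring.multichoose t m = Ring.multichoose (t + 1) n := by
  have h := congrArg (PowerSeries.coeff n) (multichooseSeries_add t 1)
  rw [PowerSeries.coeff_mul, Nat.sum_antidiagonal_eq_sum_range_succ_mk] at h
  simpa [multichooseSeries] using h.symm

end PowerSeries

end Multichoose

section Asymptotics

variable {t : ℝ}

theorem tendsto_rpow_div_multichoose (t : ℝ) :
    Tendsto (fun n : ℕ => (n : ℝ) ^ (t - 1) / Ring.multichoose t n) atTop (𝓝 (Real.Gamma t)) := by
  have hratio : Tendsto (fun n : ℕ => t / (n : ℝ) + 1) atTop (𝓝 1) := by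
    simpa using (tendsto_const_div_atTop_nhds_zero_nat t).add_const 1
  rw [← mul_one (Real.Gamma t)]
  refine ((Real.GammaSeq_tendsto_Gamma t).mul hratio).congr' ?_
  filter_upwards [eventually_gt_atTop 0, tendsto_natCast_atTop_atTop.eventually_gt_atTop (-t)]
    with n hn htn
  have hn' : (0 : ℝ) < n := by positivity
  have : t + n ≠ 0 := by linarith
  rw [multichoose_eq_prod_range_div_factorial, Real.GammaSeq, prod_range_succ,
    Real.rpow_sub_one hn'.ne']
  field_simp

theorem tendsto_multichoose_div_rpow (ht : 0 < t) :
    Tendsto (fun n : ℕ => Ring.multichoose t n / (n : ℝ) ^ (t - 1)) atTop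
      (𝓝 (Real.Gamma t)⁻¹) := by
  simpa only [inv_div] using
    (tendsto_rpow_div_multichoose t).inv₀ (Real.Gamma_pos_of_pos ht).ne'

theorem tendsto_multichoose_div_rpow_of_tendsto_div {a : ℕ → ℕ} {c : ℝ} (ht : 0 < t) (hc : 0 < c)
    (ha : Tendsto (fun n : ℕ => (a n : ℝ) / n) atTop (𝓝 c)) :
    Tendsto (fun n : ℕ => Ring.multichoose t (a n) / (n : ℝ) ^ (t - 1)) atTop
      (𝓝 ((Real.Gamma t)⁻¹ * c ^ (t - 1))) := by
  have ha_mul : ∀ᶠ n : ℕ in atTop, (a n : ℝ) / n * n = a n := by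
    filter_upwards [eventually_gt_atTop 0] with n hn
    field_simp
  have ha_atTop : Tendsto a atTop atTop :=
    tendsto_natCast_atTop_iff.mp
      ((ha.pos_mul_atTop hc tendsto_natCast_atTop_atTop).congr' ha_mul)
  refine (((tendsto_multichoose_div_rpow ht).comp ha_atTop).mul
    (ha.rpow_const (Or.inl hc.ne'))).congr' ?_
  filter_upwards [ha_atTop.eventually_gt_atTop 0] with n han
  rw [Function.comp_apply, Real.div_rpow (by positivity) (by positivity),
    div_mul_div_cancel₀ (by positivity)]

end Asymptotics

theorem coeff_prod_eq_sum_piAntidiag {R ι : Type*} [CommSemiring R] [Fintype ι] [DecidableEq ι]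
    (F : ι → PowerSeries R) (z : ℕ) :
    PowerSeries.coeff z (∏ i, F i) =
      ∑ x ∈ piAntidiag univ z, ∏ i, PowerSeries.coeff (x i) (F i) := by
  rw [PowerSeries.coeff_prod]
  refine sum_bij' (fun l _ => ⇑l) (fun x _ => Finsupp.equivFunOnFinite.symm x) ?_ ?_ ?_ ?_ ?_ <;>
    simp

section DirichletWeight

variable {ι : Type*} [Fintype ι]

/-- The weight of `x` under the Dirichlet-multinomial (Pólya urn) law with parameters `t`. On the
tuples with sum `z` these weights have total mass `Ring.multichoose (∑ i, t i) z`, so they form a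
probability distribution when `∑ i, t i = 1`. -/
noncomputable def dirichletWeight (t : ι → ℝ) (x : ι → ℕ) : ℝ :=
  ∏ i, Ring.multichoose (t i) (x i)

theorem dirichletWeight_pos {t : ι → ℝ} (ht : ∀ i, 0 < t i) (x : ι → ℕ) :
    0 < dirichletWeight t x :=
  prod_pos fun i _ => multichoose_pos (ht i) (x i)

theorem dirichletWeight_nonneg {t : ι → ℝ} (ht : ∀ i, 0 < t i) (x : ι → ℕ) :
    0 ≤ dirichletWeight t x :=
  (dirichletWeight_pos ht x).le

theorem dirichletWeight_le_of_forall_le {t : ι → ℝ} (ht : ∀ i, 0 < t i) (ht' : ∀ i, t i ≤ 1)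
    {M : ℕ} {x : ι → ℕ} (hx : ∀ i, M ≤ x i) :
    dirichletWeight t x ≤ dirichletWeight t fun _ => M :=
  prod_le_prod (fun i _ => (multichoose_pos (ht i) _).le)
    fun i _ => antitone_multichoose (ht i) (ht' i) (hx i)

theorem dirichletWeight_const_mul_rpow {t : ι → ℝ} (hsum : ∑ i, t i = 1) (M : ℕ) {z : ℝ}
    (hz : 0 < z) :
    dirichletWeight t (fun _ => M) * z ^ ((Fintype.card ι : ℝ) - 1) =
      ∏ i, Ring.multichoose (t i) M / z ^ (t i - 1) := by
  have hexp : z ^ ((Fintype.card ι : ℝ) - 1) = (∏ i, z ^ (t i - 1))⁻¹ := by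
    rw [← Real.rpow_sum_of_pos hz, ← Real.rpow_neg hz.le, sum_sub_distrib, hsum]
    simp
  rw [hexp, prod_div_distrib, dirichletWeight, div_eq_mul_inv]

variable [DecidableEq ι]

theorem sum_dirichletWeight (t : ι → ℝ) (z : ℕ) :
    ∑ x ∈ piAntidiag univ z, dirichletWeight t x = Ring.multichoose (∑ i, t i) z := by
  have h := coeff_prod_eq_sum_piAntidiag (fun i => multichooseSeries (t i)) z
  rw [← multichooseSeries_sum] at h
  simpa only [multichooseSeries, PowerSeries.coeff_mk, dirichletWeight] using h.symm

theorem sum_dirichletWeight_apply_eq (t : ι → ℝ) (i : ι) {m z : ℕ} (hmz : m ≤ z) :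
    ∑ x ∈ piAntidiag univ z with x i = m, dirichletWeight t x =
      Ring.multichoose (t i) m * Ring.multichoose (∑ j ∈ univ.erase i, t j) (z - m) := by
  -- Replacing the `i`-th series by its degree-`m` term restricts the coefficient sum to `x i = m`.
  let F : ι → PowerSeries ℝ := Function.update (fun j => multichooseSeries (t j)) i
    (PowerSeries.C (Ring.multichoose (t i) m) * PowerSeries.X ^ m)
  have hF : ∀ j ∈ univ.erase i, F j = multichooseSeries (t j) := fun j hj =>
    Function.update_of_ne (ne_of_mem_erase hj) _ _
  have hprod : ∏ j, F j = PowerSeries.C (Ring.multichoose (t i) m) *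
      (PowerSeries.X ^ m * multichooseSeries (∑ j ∈ univ.erase i, t j)) := by
    rw [← mul_prod_erase univ F (mem_univ i), prod_congr rfl hF, ← multichooseSeries_sum,
      ← mul_assoc]
    simp only [F, Function.update_self]
  have h := coeff_prod_eq_sum_piAntidiag F z
  rw [hprod, PowerSeries.coeff_C_mul, PowerSeries.coeff_X_pow_mul', if_pos hmz, multichooseSeries,
    PowerSeries.coeff_mk] at h
  rw [h, sum_filter]
  refine sum_congr rfl fun x _ => ?_
  have herase : ∏ j ∈ univ.erase i, PowerSeries.coeff (x j) (F j) =
      ∏ j ∈ univ.erase i, Ring.multichoose (t j) (x j) :=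
    prod_congr rfl fun j hj => by rw [hF j hj, multichooseSeries, PowerSeries.coeff_mk]
  rw [dirichletWeight, ← mul_prod_erase univ _ (mem_univ i), ← mul_prod_erase univ
    (fun j => PowerSeries.coeff (x j) (F j)) (mem_univ i), herase]
  simp only [F, Function.update_self, PowerSeries.coeff_C_mul_X_pow]
  split_ifs with hx <;> simp [hx]

theorem sum_dirichletWeight_apply_le_le {t : ι → ℝ} {i : ι} (hi : 0 < t i)
    (hrest : 0 < ∑ j ∈ univ.erase i, t j) (hrest' : ∑ j ∈ univ.erase i, t j ≤ 1)
    {M z : ℕ} (hMz : M ≤ z) :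
    ∑ x ∈ piAntidiag univ z with x i ≤ M, dirichletWeight t x ≤
      Ring.multichoose (t i + 1) M * Ring.multichoose (∑ j ∈ univ.erase i, t j) (z - M) := by
  have hfiber : ∀ m ∈ range (M + 1),
      ∑ x ∈ {x ∈ piAntidiag univ z | x i ≤ M} with x i = m, dirichletWeight t x =
        Ring.multichoose (t i) m * Ring.multichoose (∑ j ∈ univ.erase i, t j) (z - m) := by
    intro m hm
    have hmM : m ≤ M := mem_range_succ_iff.mp hm
    rw [← sum_dirichletWeight_apply_eq t i (hmM.trans hMz), filter_filter]
    congr! 3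
    grind
  rw [← sum_fiberwise_of_maps_to (t := range (M + 1)) (g := fun x => x i) (by simp),
    sum_congr rfl hfiber, ← sum_range_ring_multichoose, sum_mul]
  refine sum_le_sum fun m hm => ?_
  exact mul_le_mul_of_nonneg_left
    (antitone_multichoose hrest hrest' (by grind)) (multichoose_pos hi m).le

theorem card_piAntidiag_filter_apply_eq_le {i j : ι} (hij : i ≠ j) (z : ℕ) :
    #{x ∈ piAntidiag (univ : Finset ι) z | x i = x j} ≤ (z + 1) ^ (Fintype.card ι - 2) := by
  have hcard : #(Fintype.piFinset fun _ : ({i, j}ᶜ : Finset ι) => range (z + 1)) =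
      (z + 1) ^ (Fintype.card ι - 2) := by
    rw [Fintype.card_piFinset, prod_const, card_range, card_univ, Fintype.card_coe, card_compl,
      card_pair hij]
  rw [← hcard]
  -- Off `{i, j}` the entries are free; they determine `x i = x j` through the sum.
  refine card_le_card_of_injOn (fun x k => x k) ?_ ?_
  · intro x hx
    rw [mem_coe, mem_filter, mem_piAntidiag] at hx
    rw [mem_coe, Fintype.mem_piFinset]
    intro k
    rw [mem_range_succ_iff, ← hx.1.1]
    exact single_le_sum (fun _ _ => Nat.zero_le _) (mem_univ (k : ι))
  · intro x hx y hy hxy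
    rw [mem_coe, mem_filter, mem_piAntidiag] at hx hy
    have hoff : ∀ k ∈ ({i, j}ᶜ : Finset ι), x k = y k := fun k hk => congrFun hxy ⟨k, hk⟩
    have hsplit (w : ι → ℕ) : ∑ k, w k = w i + w j + ∑ k ∈ ({i, j}ᶜ : Finset ι), w k := by
      rw [← sum_add_sum_compl {i, j}, sum_pair hij]
    have hsum : ∑ k ∈ ({i, j}ᶜ : Finset ι), x k = ∑ k ∈ ({i, j}ᶜ : Finset ι), y k :=
      sum_congr rfl hoff
    have hx_sum : x i + x j + ∑ k ∈ ({i, j}ᶜ : Finset ι), x k = z := (hsplit x).symm.trans hx.1.1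
    have hy_sum : y i + y j + ∑ k ∈ ({i, j}ᶜ : Finset ι), y k = z := (hsplit y).symm.trans hy.1.1
    funext k
    by_cases hk : k ∈ ({i, j}ᶜ : Finset ι)
    · exact hoff k hk
    · rw [mem_compl, not_not, mem_insert, mem_singleton] at hk
      rcases hk with rfl | rfl <;> omega

theorem sum_dirichletWeight_apply_eq_apply_forall_lt_le {t : ι → ℝ} (ht : ∀ k, 0 < t k)
    (ht' : ∀ k, t k ≤ 1) {i j : ι} (hij : i ≠ j) (M z : ℕ) :
    ∑ x ∈ piAntidiag univ z with x i = x j ∧ ∀ k, M < x k, dirichletWeight t x ≤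
      ((z : ℝ) + 1) ^ (Fintype.card ι - 2) * dirichletWeight t fun _ => M := by
  have hcard : #{x ∈ piAntidiag (univ : Finset ι) z | x i = x j ∧ ∀ k, M < x k} ≤
      (z + 1) ^ (Fintype.card ι - 2) :=
    (card_le_card fun x hx => by grind).trans (card_piAntidiag_filter_apply_eq_le hij z)
  calc ∑ x ∈ piAntidiag univ z with x i = x j ∧ ∀ k, M < x k, dirichletWeight t x
    _ ≤ #{x ∈ piAntidiag (univ : Finset ι) z | x i = x j ∧ ∀ k, M < x k} •
          dirichletWeight t fun _ => M :=
        sum_le_card_nsmul _ _ _ fun x hx =>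
          dirichletWeight_le_of_forall_le ht ht' fun k => ((mem_filter.mp hx).2.2 k).le
    _ ≤ ((z : ℝ) + 1) ^ (Fintype.card ι - 2) * dirichletWeight t fun _ => M := by
        rw [nsmul_eq_mul]
        exact mul_le_mul_of_nonneg_right (mod_cast hcard) (dirichletWeight_nonneg ht _)

end DirichletWeight

section UnionBound

variable {α M : Type*} [AddCommMonoid M] [PartialOrder M] [IsOrderedAddMonoid M] {f : α → M}

theorem sum_filter_or_le (S : Finset α) (P Q : α → Prop) [DecidablePred P] [DecidablePred Q]
    (hf : ∀ x ∈ S, 0 ≤ f x) :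
    ∑ x ∈ S with P x ∨ Q x, f x ≤ ∑ x ∈ S with P x, f x + ∑ x ∈ S with Q x, f x := by
  classical
  rw [filter_or, ← sum_union_inter]
  exact le_add_of_nonneg_right
    (sum_nonneg fun x hx => hf x (mem_filter.mp (mem_inter.mp hx).1).1)

theorem sum_filter_exists_le {κ : Type*} [Fintype κ] (S : Finset α) (P : κ → α → Prop)
    [∀ k, DecidablePred (P k)] [DecidablePred fun x => ∃ k, P k x] (hf : ∀ x ∈ S, 0 ≤ f x) :
    ∑ x ∈ S with ∃ k, P k x, f x ≤ ∑ k, ∑ x ∈ S with P k x, f x := by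
  simp only [sum_filter]
  rw [sum_comm]
  refine sum_le_sum fun x hx => ?_
  have hterm : ∀ k ∈ univ, 0 ≤ if P k x then f x else 0 := fun k _ => by
    split_ifs
    exacts [hf x hx, le_rfl]
  split_ifs with h
  · obtain ⟨k, hk⟩ := h
    simpa only [if_pos hk] using single_le_sum hterm (mem_univ k)
  · exact sum_nonneg hterm

end UnionBound

section Concentration

theorem tendsto_floor_mul_div {ε : ℝ} (hε : 0 ≤ ε) :
    Tendsto (fun z : ℕ => (⌊ε * z⌋₊ : ℝ) / z) atTop (𝓝 ε) :=
  (tendsto_nat_floor_mul_div_atTop hε).comp tendsto_natCast_atTop_atTop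

theorem tendsto_sub_floor_mul_div {ε : ℝ} (hε : 0 ≤ ε) (hε' : ε ≤ 1) :
    Tendsto (fun z : ℕ => ((z - ⌊ε * z⌋₊ : ℕ) : ℝ) / z) atTop (𝓝 (1 - ε)) := by
  refine ((tendsto_floor_mul_div hε).const_sub 1).congr' ?_
  filter_upwards [eventually_gt_atTop 0] with z hz
  have hfloor : ⌊ε * z⌋₊ ≤ z :=
    Nat.floor_le_of_le (mul_le_of_le_one_left (Nat.cast_nonneg z) hε')
  rw [Nat.cast_sub hfloor, sub_div, div_self (by positivity)]

theorem tendsto_multichoose_floor_mul_multichoose_sub_floor {t ε : ℝ} (ht : 0 < t) (ht' : t < 1)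
    (hε : 0 < ε) (hε' : ε < 1) :
    Tendsto (fun z : ℕ =>
        Ring.multichoose (t + 1) ⌊ε * z⌋₊ * Ring.multichoose (1 - t) (z - ⌊ε * z⌋₊)) atTop
      (𝓝 ((Real.Gamma (t + 1))⁻¹ * ε ^ t * ((Real.Gamma (1 - t))⁻¹ * (1 - ε) ^ (-t)))) := by
  have hsmall := tendsto_multichoose_div_rpow_of_tendsto_div (t := t + 1) (by linarith) hε
    (tendsto_floor_mul_div hε.le)
  have hrest := tendsto_multichoose_div_rpow_of_tendsto_div (t := 1 - t) (by linarith)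
    (sub_pos.mpr hε') (tendsto_sub_floor_mul_div hε.le hε'.le)
  rw [add_sub_cancel_right] at hsmall
  rw [sub_sub_cancel_left] at hrest
  refine (hsmall.mul hrest).congr' ?_
  filter_upwards [eventually_gt_atTop 0] with z hz
  rw [div_mul_div_comm, ← Real.rpow_add (by positivity), add_neg_cancel, Real.rpow_zero, div_one]

variable {ι : Type*} [Fintype ι] [DecidableEq ι] {t : ι → ℝ}

theorem eventually_sum_dirichletWeight_apply_le_lt [Nontrivial ι] (ht : ∀ i, 0 < t i)
    (hsum : ∑ i, t i = 1) (i : ι) {δ : ℝ} (hδ : 0 < δ) :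
    ∀ᶠ ε in 𝓝[>] (0 : ℝ), ∀ᶠ z : ℕ in atTop,
      ∑ x ∈ piAntidiag univ z with (x i : ℝ) ≤ ε * z, dirichletWeight t x < δ := by
  have hrest : ∑ j ∈ univ.erase i, t j = 1 - t i := by
    rw [← hsum, ← add_sum_erase univ t (mem_univ i), add_sub_cancel_left]
  have hrest_pos : 0 < ∑ j ∈ univ.erase i, t j :=
    sum_pos (fun j _ => ht j) (univ_nontrivial.erase_nonempty)
  have hti : t i < 1 := by linarith
  have hlim : Tendsto (fun ε : ℝ =>
      (Real.Gamma (t i + 1))⁻¹ * ε ^ t i * ((Real.Gamma (1 - t i))⁻¹ * (1 - ε) ^ (-t i)))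
      (𝓝[>] 0) (𝓝 0) := by
    have hcont : ContinuousAt (fun ε : ℝ =>
        (Real.Gamma (t i + 1))⁻¹ * ε ^ t i * ((Real.Gamma (1 - t i))⁻¹ * (1 - ε) ^ (-t i))) 0 :=
      (continuousAt_const.mul (continuousAt_id.rpow_const (.inr (ht i).le))).mul
        (continuousAt_const.mul ((continuousAt_const.sub continuousAt_id).rpow_const
          (.inl (by norm_num))))
    simpa [Real.zero_rpow (ht i).ne'] using hcont.tendsto.mono_left nhdsWithin_le_nhds
  filter_upwards [hlim.eventually_lt_const hδ, Ioo_mem_nhdsGT one_pos] with ε hlt hε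
  filter_upwards [(tendsto_multichoose_floor_mul_multichoose_sub_floor (ht i) hti hε.1
    hε.2).eventually_lt_const hlt] with z hz
  have hfloor : ⌊ε * z⌋₊ ≤ z :=
    Nat.floor_le_of_le (mul_le_of_le_one_left (Nat.cast_nonneg z) hε.2.le)
  have hεz : 0 ≤ ε * z := mul_nonneg hε.1.le (Nat.cast_nonneg z)
  simp only [← Nat.le_floor_iff hεz]
  refine (sum_dirichletWeight_apply_le_le (ht i) hrest_pos ?_ hfloor).trans_lt ?_
  · linarith [ht i]
  · rwa [hrest]

theorem tendsto_sum_dirichletWeight_apply_eq_apply_forall_lt (ht : ∀ k, 0 < t k)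
    (hsum : ∑ k, t k = 1) {i j : ι} (hij : i ≠ j) {ε : ℝ} (hε : 0 < ε) :
    Tendsto (fun z : ℕ => ∑ x ∈ piAntidiag univ z with x i = x j ∧ ∀ k, ε * z < x k,
      dirichletWeight t x) atTop (𝓝 0) := by
  have ht' (k : ι) : t k ≤ 1 := hsum ▸ single_le_sum (fun k _ => (ht k).le) (mem_univ k)
  have hcard : 2 ≤ Fintype.card ι := Fintype.one_lt_card_iff.mpr ⟨i, j, hij⟩
  have hweight : Tendsto (fun z : ℕ => ∏ k, Ring.multichoose (t k) ⌊ε * z⌋₊ / (z : ℝ) ^ (t k - 1))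
      atTop (𝓝 (∏ k, (Real.Gamma (t k))⁻¹ * ε ^ (t k - 1))) :=
    tendsto_finsetProd _ fun k _ =>
      tendsto_multichoose_div_rpow_of_tendsto_div (ht k) hε (tendsto_floor_mul_div hε.le)
  have hratio : Tendsto (fun z : ℕ => (1 + 1 / (z : ℝ)) ^ (Fintype.card ι - 2)) atTop (𝓝 1) := by
    simpa using (tendsto_one_div_atTop_nhds_zero_nat.const_add (1 : ℝ)).pow (Fintype.card ι - 2)
  have hbound := (hweight.mul hratio).mul tendsto_one_div_atTop_nhds_zero_nat
  rw [mul_zero] at hbound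
  refine squeeze_zero' (.of_forall fun z => sum_nonneg fun x _ => dirichletWeight_nonneg ht x) ?_
    hbound
  filter_upwards [eventually_gt_atTop 0] with z hz
  have hz' : (0 : ℝ) < z := by positivity
  simp only [← Nat.floor_lt (mul_nonneg hε.le hz'.le)]
  refine (sum_dirichletWeight_apply_eq_apply_forall_lt_le ht ht' hij ⌊ε * z⌋₊ z).trans_eq ?_
  have hpow : (z : ℝ) ^ ((Fintype.card ι : ℝ) - 1) = z ^ (Fintype.card ι - 2) * z := by
    rw [← pow_succ, ← Real.rpow_natCast, show Fintype.card ι - 2 + 1 = Fintype.card ι - 1 by omega,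
      Nat.cast_pred (by omega)]
  rw [← dirichletWeight_const_mul_rpow hsum _ hz', hpow, one_add_div hz'.ne', div_pow]
  field_simp

theorem eventually_sum_dirichletWeight_exists_apply_le_lt [Nontrivial ι] (ht : ∀ i, 0 < t i)
    (hsum : ∑ i, t i = 1) {δ : ℝ} (hδ : 0 < δ) :
    ∀ᶠ ε in 𝓝[>] (0 : ℝ), ∀ᶠ z : ℕ in atTop,
      ∑ x ∈ piAntidiag univ z with ∃ i, (x i : ℝ) ≤ ε * z, dirichletWeight t x < δ := by
  have hsmall : ∀ᶠ ε in 𝓝[>] (0 : ℝ), ∀ i, ∀ᶠ z : ℕ in atTop,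
      ∑ x ∈ piAntidiag univ z with (x i : ℝ) ≤ ε * z, dirichletWeight t x < δ / Fintype.card ι :=
    eventually_all.mpr fun i => eventually_sum_dirichletWeight_apply_le_lt ht hsum i (by positivity)
  filter_upwards [hsmall] with ε hsmall
  filter_upwards [eventually_all.mpr hsmall] with z hsmall
  calc ∑ x ∈ piAntidiag univ z with ∃ i, (x i : ℝ) ≤ ε * z, dirichletWeight t x
    _ ≤ ∑ i, ∑ x ∈ piAntidiag univ z with (x i : ℝ) ≤ ε * z, dirichletWeight t x :=
        sum_filter_exists_le (piAntidiag univ z) (fun i x => (x i : ℝ) ≤ ε * z) fun x _ =>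
          dirichletWeight_nonneg ht x
    _ < ∑ _i : ι, δ / Fintype.card ι := sum_lt_sum_of_nonempty univ_nonempty fun i _ => hsmall i
    _ = δ := by rw [sum_const, card_univ, nsmul_eq_mul, mul_div_cancel₀ _ (by positivity)]

theorem tendsto_sum_dirichletWeight_exists_apply_lt [Nontrivial ι] (ht : ∀ i, 0 < t i)
    (hsum : ∑ i, t i = 1) {g : ℕ → ℝ} (hg : g =o[atTop] fun z : ℕ => (z : ℝ)) :
    Tendsto (fun z : ℕ => ∑ x ∈ piAntidiag univ z with ∃ i, (x i : ℝ) < g z, dirichletWeight t x)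
      atTop (𝓝 0) := by
  refine tendsto_order.mpr ⟨fun a ha => .of_forall fun z => ha.trans_le
    (sum_nonneg fun x _ => dirichletWeight_nonneg ht x), fun δ hδ => ?_⟩
  obtain ⟨ε, hsmall, hε⟩ := ((eventually_sum_dirichletWeight_exists_apply_le_lt ht hsum hδ).and
    self_mem_nhdsWithin).exists
  filter_upwards [hsmall, hg.bound hε] with z hsmall hgz
  refine (sum_le_sum_of_subset_of_nonneg ?_ fun x _ _ => dirichletWeight_nonneg ht x).trans_lt
    hsmall
  refine monotone_filter_right _ fun x _ hx => hx.imp fun i hxi => hxi.le.trans ?_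
  simpa using (le_abs_self (g z)).trans hgz

theorem tendsto_sum_dirichletWeight_apply_eq_apply (ht : ∀ i, 0 < t i)
    (hsum : ∑ i, t i = 1) {i j : ι} (hij : i ≠ j) :
    Tendsto (fun z : ℕ => ∑ x ∈ piAntidiag univ z with x i = x j, dirichletWeight t x)
      atTop (𝓝 0) := by
  have : Nontrivial ι := ⟨i, j, hij⟩
  refine tendsto_order.mpr ⟨fun a ha => .of_forall fun z => ha.trans_le
    (sum_nonneg fun x _ => dirichletWeight_nonneg ht x), fun δ hδ => ?_⟩
  obtain ⟨ε, hsmall, hε⟩ := ((eventually_sum_dirichletWeight_exists_apply_le_lt ht hsum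
    (half_pos hδ)).and self_mem_nhdsWithin).exists
  filter_upwards [hsmall, (tendsto_sum_dirichletWeight_apply_eq_apply_forall_lt ht hsum hij
    hε).eventually_lt_const (half_pos hδ)] with z hsmall hlarge
  have hcases (x : ι → ℕ) (hx : x i = x j) :
      (∃ k, (x k : ℝ) ≤ ε * z) ∨ x i = x j ∧ ∀ k, ε * z < x k :=
    (em _).imp_right fun hx' => ⟨hx, fun k => not_le.mp (not_exists.mp hx' k)⟩
  calc ∑ x ∈ piAntidiag univ z with x i = x j, dirichletWeight t x
    _ ≤ ∑ x ∈ piAntidiag univ z with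
          (∃ k, (x k : ℝ) ≤ ε * z) ∨ x i = x j ∧ ∀ k, ε * z < x k, dirichletWeight t x :=
        sum_le_sum_of_subset_of_nonneg (monotone_filter_right _ fun x _ => hcases x)
          fun x _ _ => dirichletWeight_nonneg ht x
    _ ≤ _ := sum_filter_or_le _ _ _ fun x _ => dirichletWeight_nonneg ht x
    _ < δ / 2 + δ / 2 := add_lt_add hsmall hlarge
    _ = δ := add_halves δ

theorem tendsto_sum_dirichletWeight_not_injective (ht : ∀ i, 0 < t i)
    (hsum : ∑ i, t i = 1) :
    Tendsto (fun z : ℕ => ∑ x ∈ piAntidiag univ z with ¬ x.Injective, dirichletWeight t x)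
      atTop (𝓝 0) := by
  have hpairs : Tendsto (fun z : ℕ => ∑ p : {p : ι × ι // p.1 ≠ p.2},
      ∑ x ∈ piAntidiag univ z with x p.1.1 = x p.1.2, dirichletWeight t x) atTop (𝓝 0) := by
    simpa only [sum_const_zero] using tendsto_finsetSum univ
      fun (p : {p : ι × ι // p.1 ≠ p.2}) _ =>
        tendsto_sum_dirichletWeight_apply_eq_apply ht hsum p.2
  refine squeeze_zero (fun z => sum_nonneg fun x _ => dirichletWeight_nonneg ht x) (fun z => ?_)
    hpairs
  have hexists (x : ι → ℕ) : ¬ x.Injective ↔ ∃ p : {p : ι × ι // p.1 ≠ p.2}, x p.1.1 = x p.1.2 := by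
    simp only [Function.not_injective_iff, Subtype.exists, Prod.exists, exists_prop, and_comm]
  rw [filter_congr fun x _ => hexists x]
  exact sum_filter_exists_le (piAntidiag univ z)
    (fun (p : {p : ι × ι // p.1 ≠ p.2}) x => x p.1.1 = x p.1.2)
    fun x _ => dirichletWeight_nonneg ht x

end Concentration

section PowerSum

variable {ι : Type*} [Fintype ι] {t : ι → ℝ}

theorem tendsto_prod_rpow_div_dirichletWeight (t : ι → ℝ) :
    Tendsto (fun x : ι → ℕ => (∏ i, (x i : ℝ) ^ (t i - 1)) / dirichletWeight t x) atTop
      (𝓝 (∏ i, Real.Gamma (t i))) := by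
  have heval (i : ι) : Tendsto (fun x : ι → ℕ => x i) atTop atTop :=
    (Function.monotone_eval i).tendsto_atTop_atTop fun N => ⟨fun _ => N, le_rfl⟩
  simp only [dirichletWeight, ← prod_div_distrib]
  exact tendsto_finsetProd _ fun i _ => (tendsto_rpow_div_multichoose (t i)).comp (heval i)

theorem bddAbove_range_abs_prod_rpow_div_dirichletWeight (t : ι → ℝ) :
    BddAbove (Set.range fun x : ι → ℕ =>
      |(∏ i, (x i : ℝ) ^ (t i - 1)) / dirichletWeight t x|) := by
  choose K hK using fun i => (tendsto_rpow_div_multichoose (t i)).abs.bddAbove_range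
  refine ⟨∏ i, K i, ?_⟩
  rintro _ ⟨x, rfl⟩
  simp only [dirichletWeight, ← prod_div_distrib, abs_prod]
  exact prod_le_prod (fun i _ => abs_nonneg _) fun i _ => hK i ⟨x i, rfl⟩

variable [DecidableEq ι] [Nontrivial ι]

theorem tendsto_sum_mul_dirichletWeight {F : (ι → ℕ) → ℝ} {L : ℝ} (ht : ∀ i, 0 < t i)
    (hsum : ∑ i, t i = 1) (hF : BddAbove (Set.range fun x => |F x|))
    (hlim : Tendsto F atTop (𝓝 L)) :
    Tendsto (fun z : ℕ => ∑ x ∈ piAntidiag univ z, F x * dirichletWeight t x) atTop (𝓝 L) := by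
  obtain ⟨K, hK⟩ := hF
  have hbound (x : ι → ℕ) : |F x - L| ≤ K + |L| :=
    (abs_sub _ _).trans (add_le_add_left (hK ⟨x, rfl⟩) _)
  refine Metric.tendsto_nhds.mpr fun δ hδ => ?_
  obtain ⟨a, ha⟩ := eventually_atTop.mp
    (hlim.eventually (Metric.closedBall_mem_nhds L (half_pos hδ)))
  have hclose (x : ι → ℕ) (hx : ¬ ∃ i, (x i : ℝ) < ∑ j, (a j : ℝ)) : |F x - L| ≤ δ / 2 := by
    refine ha x fun i => ?_
    have hi : ∑ j, a j ≤ x i := by exact_mod_cast not_lt.mp (not_exists.mp hx i)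
    exact (single_le_sum (fun _ _ => Nat.zero_le _) (mem_univ i)).trans hi
  have hconst : (fun _ => ∑ j, (a j : ℝ)) =o[atTop] fun z : ℕ => (z : ℝ) :=
    (Asymptotics.isLittleO_const_id_atTop (∑ j, (a j : ℝ))).comp_tendsto tendsto_natCast_atTop_atTop
  have hsmall := (tendsto_sum_dirichletWeight_exists_apply_lt ht hsum hconst).const_mul (K + |L|)
  rw [mul_zero] at hsmall
  filter_upwards [hsmall.eventually_lt_const (half_pos hδ)] with z hz
  have hone : ∑ x ∈ piAntidiag univ z, dirichletWeight t x = 1 := by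
    rw [sum_dirichletWeight, hsum, Ring.multichoose_one]
  calc |∑ x ∈ piAntidiag univ z, F x * dirichletWeight t x - L|
    _ = |∑ x ∈ piAntidiag univ z, (F x - L) * dirichletWeight t x| := by
        simp only [sub_mul, sum_sub_distrib, ← mul_sum, hone, mul_one]
    _ ≤ ∑ x ∈ piAntidiag univ z, |F x - L| * dirichletWeight t x := by
        refine (abs_sum_le_sum_abs _ _).trans_eq (sum_congr rfl fun x _ => ?_)
        rw [abs_mul, abs_of_nonneg (dirichletWeight_nonneg ht x)]
    _ ≤ ∑ x ∈ piAntidiag univ z, (δ / 2 * dirichletWeight t x + (K + |L|) *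
          if ∃ i, (x i : ℝ) < ∑ j, (a j : ℝ) then dirichletWeight t x else 0) := by
        refine sum_le_sum fun x _ => ?_
        have hw := dirichletWeight_nonneg ht x
        split_ifs with hx
        · exact (mul_le_mul_of_nonneg_right (hbound x) hw).trans
            (le_add_of_nonneg_left (by positivity))
        · rw [mul_zero, add_zero]
          exact mul_le_mul_of_nonneg_right (hclose x hx) hw
    _ = δ / 2 + (K + |L|) * ∑ x ∈ piAntidiag univ z with ∃ i, (x i : ℝ) < ∑ j, (a j : ℝ),
          dirichletWeight t x := by
        rw [sum_add_distrib, ← mul_sum, ← mul_sum, hone, mul_one, sum_filter]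
    _ < δ := by linarith

theorem tendsto_sum_prod_rpow (ht : ∀ i, 0 < t i) (hsum : ∑ i, t i = 1) :
    Tendsto (fun z : ℕ => ∑ x ∈ piAntidiag univ z, ∏ i, (x i : ℝ) ^ (t i - 1)) atTop
      (𝓝 (∏ i, Real.Gamma (t i))) := by
  refine (tendsto_sum_mul_dirichletWeight ht hsum
    (bddAbove_range_abs_prod_rpow_div_dirichletWeight t)
    (tendsto_prod_rpow_div_dirichletWeight t)).congr fun z => sum_congr rfl fun x _ => ?_
  exact div_mul_cancel₀ _ (dirichletWeight_pos ht x).ne'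

theorem tendsto_sum_filter_prod_rpow (ht : ∀ i, 0 < t i) (hsum : ∑ i, t i = 1)
    {P : ℕ → (ι → ℕ) → Prop} [∀ z, DecidablePred (P z)]
    (hP : Tendsto (fun z : ℕ => ∑ x ∈ piAntidiag univ z with ¬ P z x, dirichletWeight t x) atTop
      (𝓝 0)) :
    Tendsto (fun z : ℕ => ∑ x ∈ piAntidiag univ z with P z x, ∏ i, (x i : ℝ) ^ (t i - 1)) atTop
      (𝓝 (∏ i, Real.Gamma (t i))) := by
  obtain ⟨K, hK⟩ := bddAbove_range_abs_prod_rpow_div_dirichletWeight t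
  have hdom (x : ι → ℕ) : ∏ i, (x i : ℝ) ^ (t i - 1) ≤ K * dirichletWeight t x :=
    (div_le_iff₀ (dirichletWeight_pos ht x)).mp ((le_abs_self _).trans (hK ⟨x, rfl⟩))
  have hcompl : Tendsto (fun z : ℕ => ∑ x ∈ piAntidiag univ z with ¬ P z x,
      ∏ i, (x i : ℝ) ^ (t i - 1)) atTop (𝓝 0) := by
    refine squeeze_zero (fun z => sum_nonneg fun x _ => by positivity) (fun z => ?_)
      (by simpa only [mul_zero] using hP.const_mul K)
    rw [mul_sum]
    exact sum_le_sum fun x _ => hdom x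
  rw [← sub_zero (∏ i, Real.Gamma (t i))]
  refine ((tendsto_sum_prod_rpow ht hsum).sub hcompl).congr fun z => ?_
  rw [← sum_filter_add_sum_filter_not _ (P z), add_sub_cancel_right]

theorem tendsto_sum_injective_prod_rpow (ht : ∀ i, 0 < t i) (hsum : ∑ i, t i = 1)
    {g : ℕ → ℝ} (hg : g =o[atTop] fun z : ℕ => (z : ℝ)) :
    Tendsto (fun z : ℕ => ∑ x ∈ piAntidiag univ z with (∀ i, g z ≤ x i) ∧ x.Injective,
      ∏ i, (x i : ℝ) ^ (t i - 1)) atTop (𝓝 (∏ i, Real.Gamma (t i))) := by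
  refine tendsto_sum_filter_prod_rpow ht hsum ?_
  have hnegligible := (tendsto_sum_dirichletWeight_exists_apply_lt ht hsum hg).add
    (tendsto_sum_dirichletWeight_not_injective ht hsum)
  rw [add_zero] at hnegligible
  refine squeeze_zero (fun z => sum_nonneg fun x _ => dirichletWeight_nonneg ht x) (fun z => ?_)
    hnegligible
  simp only [not_and_or, not_forall, not_le]
  exact sum_filter_or_le _ _ _ fun x _ => dirichletWeight_nonneg ht x

end PowerSum

section Symmetrization

theorem exists_perm_strictAnti_comp {α : Type*} [LinearOrder α] {n : ℕ} {x : Fin n → α}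
    (hx : x.Injective) : ∃ σ : Equiv.Perm (Fin n), StrictAnti (x ∘ σ) :=
  ⟨Fin.revPerm.trans (Tuple.sort x), Antitone.strictAnti_of_injective
    (fun _ _ hij => Tuple.monotone_sort x (Fin.rev_le_rev.mpr hij))
    (hx.comp (Equiv.injective _))⟩

theorem strictAnti_comp_perm_inj {α : Type*} [LinearOrder α] {n : ℕ} {y w : Fin n → α}
    (hy : StrictAnti y) (hw : StrictAnti w) {σ τ : Equiv.Perm (Fin n)} (h : y ∘ σ = w ∘ τ) :
    y = w ∧ σ = τ := by
  have hyw : y = w := by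
    rw [← StrictAnti.range_inj hy hw, ← σ.surjective.range_comp y, h, τ.surjective.range_comp]
  subst hyw
  exact ⟨rfl, Equiv.ext fun k => hy.injective (congrFun h k)⟩

theorem sum_filter_injective_eq_factorial_nsmul {α M : Type*} [LinearOrder α] [AddCommMonoid M]
    {n : ℕ} {U : Finset (Fin n → α)} {f : (Fin n → α) → M}
    (hU : ∀ x ∈ U, ∀ σ : Equiv.Perm (Fin n), x ∘ σ ∈ U)
    (hf : ∀ x (σ : Equiv.Perm (Fin n)), f (x ∘ σ) = f x) :
    ∑ x ∈ U with x.Injective, f x = n.factorial • ∑ x ∈ U with StrictAnti x, f x := by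
  have hprod : n.factorial • ∑ x ∈ U with StrictAnti x, f x =
      ∑ p ∈ (univ : Finset (Equiv.Perm (Fin n))) ×ˢ {x ∈ U | StrictAnti x}, f (p.2 ∘ p.1) := by
    simp only [sum_product, hf, sum_const, card_univ, Fintype.card_perm, Fintype.card_fin]
  rw [hprod]
  refine (sum_nbij (fun p : Equiv.Perm (Fin n) × (Fin n → α) => p.2 ∘ p.1) ?_ ?_ ?_
    fun _ _ => rfl).symm
  · rintro ⟨σ, y⟩ hy
    rw [mem_product, mem_filter] at hy
    exact mem_filter.mpr ⟨hU y hy.2.1 σ, hy.2.2.injective.comp σ.injective⟩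
  · rintro ⟨σ, y⟩ hy ⟨τ, w⟩ hw h
    rw [mem_coe, mem_product, mem_filter] at hy hw
    obtain ⟨hyw, hστ⟩ := strictAnti_comp_perm_inj hy.2.2 hw.2.2 h
    exact Prod.ext hστ hyw
  · intro x hx
    rw [mem_coe, mem_filter] at hx
    obtain ⟨σ, hσ⟩ := exists_perm_strictAnti_comp hx.2
    refine ⟨(σ.symm, x ∘ σ), by simp [hU x hx.1 σ, hσ], ?_⟩
    funext k
    simp

theorem filter_piFinset_Icc_strictAnti_eq {s z : ℕ} {c : ℝ} (hc : 0 < c) :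
    {x ∈ Fintype.piFinset fun _ : Fin s => Icc 1 z |
        (∀ i j : Fin s, i < j → x j < x i) ∧ (∀ i, c ≤ (x i : ℝ)) ∧ ∑ i, x i = z} =
      {x ∈ ({x ∈ piAntidiag univ z | ∀ i, c ≤ (x i : ℝ)} : Finset (Fin s → ℕ)) | StrictAnti x} := by
  ext x
  simp only [mem_filter, Fintype.mem_piFinset, mem_Icc, mem_piAntidiag, mem_univ, implies_true,
    and_true]
  constructor
  · rintro ⟨-, hanti, hge, hsum⟩
    exact ⟨⟨hsum, hge⟩, hanti⟩
  · rintro ⟨⟨hsum, hge⟩, hanti⟩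
    refine ⟨fun i => ⟨?_, ?_⟩, hanti, hge, hsum⟩
    · exact Nat.cast_pos.mp (hc.trans_le (hge i))
    · exact (single_le_sum (fun _ _ => Nat.zero_le _) (mem_univ i)).trans_eq hsum

theorem sum_filter_injective_prod_rpow_eq_factorial_nsmul (s z : ℕ) (c a : ℝ) :
    ∑ x ∈ piAntidiag univ z with (∀ i : Fin s, c ≤ (x i : ℝ)) ∧ x.Injective, ∏ i, (x i : ℝ) ^ a =
      s.factorial • ∑ x ∈ {x ∈ piAntidiag univ z | ∀ i : Fin s, c ≤ (x i : ℝ)} with StrictAnti x,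
        ∏ i, (x i : ℝ) ^ a := by
  rw [← filter_filter]
  refine sum_filter_injective_eq_factorial_nsmul (fun x hx σ => ?_) fun x σ =>
    Equiv.prod_comp σ fun i => (x i : ℝ) ^ a
  simp only [mem_filter, mem_piAntidiag, mem_univ, implies_true, and_true] at hx ⊢
  exact ⟨(Equiv.sum_comp σ x).trans hx.1, fun i => hx.2 (σ i)⟩

end Symmetrization

theorem pow_mul_lambdaS {s : ℕ} (hs : s ≠ 0) :
    (s : ℝ) ^ s * lambdaS s = Real.Gamma (1 / s) ^ s / s.factorial := by
  rw [lambdaS]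
  field_simp

/-- Lemma 1 (iii): if `g` is positive with `g(z) = o(z)`, then the sum over tuples of
positive integers `g(z) ≤ x_s < ⋯ < x_1` with `x_1 + ⋯ + x_s = z` of `(x_1 ⋯ x_s)^{-1+1/s}`
tends to `s^s λ_s` as `z → ∞`. -/
theorem stmt_6 (s : ℕ) (hs : 2 ≤ s) (g : ℕ → ℝ) (hgpos : ∀ z, 0 < g z)
    (hgo : g =o[Filter.atTop] fun z : ℕ => (z : ℝ)) :
    Filter.Tendsto
      (fun z : ℕ =>
        ∑ x ∈ (Fintype.piFinset fun _ : Fin s => Finset.Icc 1 z).filter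
            (fun x : Fin s → ℕ =>
              (∀ i j : Fin s, i < j → x j < x i) ∧ (∀ i, g z ≤ (x i : ℝ)) ∧ ∑ i, x i = z),
          ∏ i, (x i : ℝ) ^ (-1 + 1 / (s : ℝ)))
      Filter.atTop (nhds ((s : ℝ) ^ s * lambdaS s)) := by
  have : Nontrivial (Fin s) := Fin.nontrivial_iff_two_le.mpr hs
  have hsum : ∑ _i : Fin s, 1 / (s : ℝ) = 1 := by
    rw [sum_const, card_univ, Fintype.card_fin, nsmul_eq_mul, mul_one_div_cancel (by positivity)]
  have hinj := (tendsto_sum_injective_prod_rpow (fun _ => by positivity) hsum hgo).div_const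
    (s.factorial : ℝ)
  rw [prod_const, card_univ, Fintype.card_fin, ← pow_mul_lambdaS (by positivity)] at hinj
  refine hinj.congr fun z => ?_
  rw [div_eq_iff (by positivity), mul_comm, ← nsmul_eq_mul, neg_add_eq_sub,
    filter_piFinset_Icc_strictAnti_eq (hgpos z),
    ← sum_filter_injective_prod_rpow_eq_factorial_nsmul]
  -- The two sides differ only in their decidability instances.
  congr!
end

section
/- Let s ≥ 2 be an integer and c > 0. For an integer n ≥ 2 let Ω_n be the collection of all (s+1)-element sets ω = {x_1, …, x_{s+1}} of positive integers with x_{s+1} < (c·log n)^s < x_s < x_{s-1} < ⋯ < x_1 and x_1 + ⋯ + x_{s+1} = n. Define Δ_n = Σ s^{-|ω∪ω'|} · ∏_{x∈ω∪ω'} x^{-1+1/s}, where the sum runs over all ordered pairs (ω, ω') of elements of Ω_n with ω ≠ ω' and ω ∩ ω' ≠ ∅. Then Δ_n ≤ (1+o(1)) · c · λ_s^2 · log n as n → ∞; in particular limsup_{n→∞} Δ_n / log n ≤ c·λ_s^2. -/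
open Finset Filter

/-- The family `Ω_n` of `(s+1)`-element sets `ω = {x_1 > ⋯ > x_{s+1}}` of positive integers
with `x_1 + ⋯ + x_{s+1} = n` and `x_{s+1} < (c log n)^s < x_s` (i.e. exactly one element of
`ω` lies below `(c log n)^s` and no element equals it). -/
noncomputable def OmegaN (s : ℕ) (c : ℝ) (n : ℕ) : Finset (Finset ℕ) :=
  (Finset.powersetCard (s + 1) (Finset.Icc 1 n)).filter
    (fun ω : Finset ℕ => ω.sum id = n ∧
      (ω.filter fun x : ℕ => (x : ℝ) < (c * Real.log n) ^ s).card = 1 ∧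
      ∀ x ∈ ω, (x : ℝ) ≠ (c * Real.log n) ^ s)

/-- The correlation term
`Δ_n = Σ_{ω ≠ ω' ∈ Ω_n, ω ∩ ω' ≠ ∅} s^{-|ω ∪ ω'|} ∏_{x ∈ ω ∪ ω'} x^{-1+1/s}`. -/
noncomputable def DeltaN (s : ℕ) (c : ℝ) (n : ℕ) : ℝ :=
  ∑ p ∈ (OmegaN s c n ×ˢ OmegaN s c n).filter
      (fun p : Finset ℕ × Finset ℕ => p.1 ≠ p.2 ∧ (p.1 ∩ p.2).Nonempty),
    ((s : ℝ) ^ (p.1 ∪ p.2).card)⁻¹ * ∏ x ∈ p.1 ∪ p.2, (x : ℝ) ^ (-1 + 1 / (s : ℝ))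

/-!
Put `θ = 1/s` and `T = (c log n)^s`. The weight `θ x^{θ-1}` is `(1 + o(1)) Γ(θ+1)` times the
coefficient `multichoose θ x` of `X^x` in `(1 - X)^{-θ}`. By Vandermonde's identity these
coefficients convolve exactly, so the representations of `m` as a sum of `s` distinct integers above
`T` have total weight at most `(1 + o(1)) Γ(θ+1)^s / s! = (1 + o(1)) λ_s`, uniformly in `m`.

If `ω` and `ω'` meet but their elements above `T` are disjoint, then they share their smallest
element `x < T`; such pairs contribute at most
`∑_{x < T} θ x^{θ-1} · (1 + o(1)) λ_s² ≤ (1 + o(1)) T^θ λ_s² = (1 + o(1)) c λ_s² log n`.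

If they share an element above `T` and each has `r` elements above `T` outside the other, write
`φ = r θ`. The AM-GM inequality reduces their contribution to sums of
`multichoose (1 - φ) i * multichoose φ (m - i) ^ 2`. Since
`multichoose φ j ^ 2 ≪ multichoose (φ - θ/2) j`, Vandermonde's identity bounds these sums by a
constant times `multichoose (1 - θ/2) m ≪ m^{-θ/2}`, which beats the `T²` choices of the two
smallest elements.
-/

open Ring (multichoose)

section Multichoose

lemma one_add_mul_self_le_rpow_one_add_of_nonpos {x p : ℝ} (hx : 0 ≤ x) (hp₁ : -1 ≤ p)
    (hp₀ : p ≤ 0) : 1 + p * x ≤ (1 + x) ^ p := by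
  have hpos : 0 < 1 - p * x := by nlinarith
  calc 1 + p * x ≤ (1 - p * x)⁻¹ := by
        rw [← one_div, le_div_iff₀ hpos]; nlinarith [sq_nonneg (p * x)]
    _ ≤ ((1 + x) ^ (-p))⁻¹ := by
        have h := rpow_one_add_le_one_add_mul_self (s := x) (by linarith)
          (neg_nonneg.mpr hp₀) (by linarith)
        have : 0 < (1 + x) ^ (-p) := Real.rpow_pos_of_pos (by linarith) _
        gcongr
        linarith
    _ = (1 + x) ^ p := by rw [Real.rpow_neg (by linarith), inv_inv]

lemma sum_antidiagonal_multichoose_mul {R : Type*} [CommRing R] [BinomialRing R] (a b : R)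
    (m : ℕ) :
    ∑ p ∈ antidiagonal m, multichoose a p.1 * multichoose b p.2 = multichoose (a + b) m := by
  have vandermonde := Ring.add_choose_eq m (Commute.all (-a) (-b))
  have sign_mul : ∀ p ∈ antidiagonal m, Ring.choose (-a) p.1 * Ring.choose (-b) p.2 =
      Int.negOnePow m • (multichoose a p.1 * multichoose b p.2) := fun p hp => by
    rw [Ring.choose_neg', Ring.choose_neg', smul_mul_smul_comm, ← Int.negOnePow_add,
      ← Nat.cast_add, mem_antidiagonal.mp hp]
  rw [← neg_add, Ring.choose_neg', sum_congr rfl sign_mul, ← smul_sum] at vandermonde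
  exact (smul_left_cancel _ vandermonde).symm

lemma multichoose_eq_ascPochhammer_eval_div {K : Type*} [Field K] [CharZero K] (a : K) (m : ℕ) :
    multichoose a m = (ascPochhammer K m).eval a / m.factorial := by
  rw [eq_div_iff (Nat.cast_ne_zero.mpr m.factorial_ne_zero), mul_comm, ← nsmul_eq_mul,
    Ring.factorial_nsmul_multichoose_eq_ascPochhammer, Polynomial.ascPochhammer_smeval_eq_eval]

lemma multichoose_succ_right {K : Type*} [Field K] [CharZero K] (a : K) (m : ℕ) :
    multichoose a (m + 1) = multichoose a m * ((a + m) / (m + 1)) := by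
  rw [multichoose_eq_ascPochhammer_eval_div, multichoose_eq_ascPochhammer_eval_div,
    ascPochhammer_succ_eval, Nat.factorial_succ, div_mul_div_comm, Nat.cast_mul, Nat.cast_succ,
    mul_comm (m.factorial : K)]

variable {θ : ℝ}

lemma multichoose_nonneg (hθ : 0 ≤ θ) (m : ℕ) : 0 ≤ multichoose θ m := by
  induction m with
  | zero => simp
  | succ m ih => rw [multichoose_succ_right]; positivity

lemma Gamma_mul_multichoose (hθ : 0 < θ) (m : ℕ) :
    Real.Gamma θ * multichoose θ m = Real.Gamma (m + θ) / m.factorial := by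
  induction m with
  | zero => simp
  | succ m ih =>
    rw [multichoose_succ_right, ← mul_assoc, ih, Nat.cast_succ, add_right_comm,
      Real.Gamma_add_one (by positivity), Nat.factorial_succ, Nat.cast_mul, Nat.cast_succ]
    field_simp
    ring

lemma multichoose_le_rpow (hθ₀ : 0 ≤ θ) (hθ₁ : θ ≤ 1) (m : ℕ) :
    multichoose θ m ≤ ((m : ℝ) + 1) ^ (θ - 1) := by
  induction m with
  | zero => simp
  | succ m ih =>
    have hm : (0 : ℝ) < m + 1 := by positivity
    have bernoulli : (θ + m) / (m + 1) ≤ (1 + 1 / ((m : ℝ) + 1)) ^ (θ - 1) :=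
      calc (θ + m) / (m + 1) = 1 + (θ - 1) * (1 / ((m : ℝ) + 1)) := by field_simp; ring
        _ ≤ (1 + 1 / ((m : ℝ) + 1)) ^ (θ - 1) :=
          one_add_mul_self_le_rpow_one_add_of_nonpos (by positivity) (by linarith) (by linarith)
    calc multichoose θ (m + 1) = multichoose θ m * ((θ + m) / (m + 1)) :=
          multichoose_succ_right θ m
      _ ≤ ((m : ℝ) + 1) ^ (θ - 1) * (1 + 1 / ((m : ℝ) + 1)) ^ (θ - 1) := by gcongr
      _ = (((m + 1 : ℕ) : ℝ) + 1) ^ (θ - 1) := by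
          rw [← Real.mul_rpow hm.le (by positivity), mul_one_add, mul_one_div_cancel hm.ne',
            Nat.cast_succ]

/-- Log-convexity of the Gamma function between `m + θ` and `m + θ + 1`. -/
lemma rpow_le_Gamma_mul_multichoose (hθ₀ : 0 < θ) (hθ₁ : θ ≤ 1) (m : ℕ) :
    ((m : ℝ) + 1) ^ (θ - 1) ≤ Real.Gamma θ * multichoose θ m := by
  have hΓ : 0 < Real.Gamma (m + θ) := Real.Gamma_pos_of_pos (by positivity)
  have wendel : (m.factorial : ℝ) ≤ (m + θ) ^ (1 - θ) * Real.Gamma (m + θ) := by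
    rcases hθ₁.eq_or_lt with rfl | hθ₁
    · simp [Real.Gamma_nat_eq_factorial]
    have h := Real.Gamma_mul_add_mul_le_rpow_Gamma_mul_rpow_Gamma (s := m + θ) (t := m + θ + 1)
      (a := θ) (b := 1 - θ) (by positivity) (by positivity) hθ₀ (by linarith) (by ring)
    rwa [show θ * (m + θ) + (1 - θ) * (m + θ + 1) = (m : ℝ) + 1 by ring,
      Real.Gamma_nat_eq_factorial, Real.Gamma_add_one (by positivity),
      Real.mul_rpow (by positivity) hΓ.le, mul_left_comm, ← Real.rpow_add hΓ, add_sub_cancel,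
      Real.rpow_one] at h
  rw [Gamma_mul_multichoose hθ₀, le_div_iff₀ (by positivity), ← neg_sub,
    Real.rpow_neg (by positivity), inv_mul_le_iff₀ (by positivity)]
  calc (m.factorial : ℝ) ≤ (m + θ) ^ (1 - θ) * Real.Gamma (m + θ) := wendel
    _ ≤ (m + 1) ^ (1 - θ) * Real.Gamma (m + θ) := by gcongr

lemma sq_multichoose_le {φ δ : ℝ} (hδ : 0 ≤ δ) (hδφ : δ < φ) (hδφ' : φ + δ ≤ 1) (m : ℕ) :
    multichoose φ m ^ 2 ≤ Real.Gamma (φ - δ) * multichoose (φ - δ) m := by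
  calc multichoose φ m ^ 2 ≤ (((m : ℝ) + 1) ^ (φ - 1)) ^ 2 := by
        gcongr
        · exact multichoose_nonneg (by linarith) m
        · exact multichoose_le_rpow (by linarith) (by linarith) m
    _ = ((m : ℝ) + 1) ^ ((φ - 1) * 2) := by rw [Real.rpow_mul (by positivity), Real.rpow_two]
    _ ≤ ((m : ℝ) + 1) ^ (φ - δ - 1) := by
        gcongr <;> linarith
    _ ≤ Real.Gamma (φ - δ) * multichoose (φ - δ) m :=
         rpow_le_Gamma_mul_multichoose (by linarith) (by linarith) m

lemma sum_antidiagonal_multichoose_mul_sq_le {φ δ : ℝ} (hδ : 0 ≤ δ) (hδφ : δ < φ)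
    (hδφ' : φ + δ ≤ 1) (m : ℕ) :
    ∑ p ∈ antidiagonal m, multichoose (1 - φ) p.1 * multichoose φ p.2 ^ 2 ≤
      Real.Gamma (φ - δ) * ((m : ℝ) + 1) ^ (-δ) := by
  have : 0 < Real.Gamma (φ - δ) := Real.Gamma_pos_of_pos (by linarith)
  calc ∑ p ∈ antidiagonal m, multichoose (1 - φ) p.1 * multichoose φ p.2 ^ 2
      ≤ ∑ p ∈ antidiagonal m,
          multichoose (1 - φ) p.1 * (Real.Gamma (φ - δ) * multichoose (φ - δ) p.2) := by
        gcongr with p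
        · exact multichoose_nonneg (by linarith) _
        · exact sq_multichoose_le hδ hδφ hδφ' _
    _ = Real.Gamma (φ - δ) * multichoose (1 - δ) m := by
        rw [← sub_add_sub_cancel 1 φ δ, ← sum_antidiagonal_multichoose_mul, mul_sum]
        exact sum_congr rfl fun _ _ => mul_left_comm _ _ _
    _ ≤ Real.Gamma (φ - δ) * ((m : ℝ) + 1) ^ (-δ) := by
        gcongr
        simpa using multichoose_le_rpow (θ := 1 - δ) (by linarith) (by linarith) m

lemma sum_multichoose_mul_mul_le {φ δ : ℝ} (hδ : 0 ≤ δ) (hδφ : δ < φ) (hδφ' : φ + δ ≤ 1)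
    {k m m' : ℕ} (hm : k ≤ m) (hm' : k ≤ m') :
    ∑ i ∈ range (min m m' + 1),
        multichoose (1 - φ) i * (multichoose φ (m - i) * multichoose φ (m' - i)) ≤
      Real.Gamma (φ - δ) * ((k : ℝ) + 1) ^ (-δ) := by
  have hnn : ∀ i, 0 ≤ multichoose (1 - φ) i := multichoose_nonneg (by linarith)
  have sq_sum_le : ∀ {l}, k ≤ l → min m m' ≤ l →
      ∑ i ∈ range (min m m' + 1), multichoose (1 - φ) i * multichoose φ (l - i) ^ 2 ≤
        Real.Gamma (φ - δ) * ((k : ℝ) + 1) ^ (-δ) := fun {l} hkl hl => by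
    have : 0 < Real.Gamma (φ - δ) := Real.Gamma_pos_of_pos (by linarith)
    calc ∑ i ∈ range (min m m' + 1), multichoose (1 - φ) i * multichoose φ (l - i) ^ 2
        ≤ ∑ i ∈ range (l + 1), multichoose (1 - φ) i * multichoose φ (l - i) ^ 2 :=
          sum_le_sum_of_subset_of_nonneg (range_mono (by lia))
            fun i _ _ => mul_nonneg (hnn i) (sq_nonneg _)
      _ = ∑ p ∈ antidiagonal l, multichoose (1 - φ) p.1 * multichoose φ p.2 ^ 2 :=
          (Nat.sum_antidiagonal_eq_sum_range_succ
            (fun i j => multichoose (1 - φ) i * multichoose φ j ^ 2) l).symm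
      _ ≤ Real.Gamma (φ - δ) * ((l : ℝ) + 1) ^ (-δ) :=
          sum_antidiagonal_multichoose_mul_sq_le hδ hδφ hδφ' l
      _ ≤ Real.Gamma (φ - δ) * ((k : ℝ) + 1) ^ (-δ) := by
          gcongr ?_ * ?_
          exact Real.rpow_le_rpow_of_nonpos (by positivity) (by gcongr) (by linarith)
  have am_gm : ∀ i, multichoose (1 - φ) i * (multichoose φ (m - i) * multichoose φ (m' - i)) ≤
      (multichoose (1 - φ) i * multichoose φ (m - i) ^ 2 +
        multichoose (1 - φ) i * multichoose φ (m' - i) ^ 2) / 2 := fun i => by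
    nlinarith [mul_nonneg (hnn i) (sq_nonneg (multichoose φ (m - i) - multichoose φ (m' - i)))]
  have h := sum_le_sum fun i (_ : i ∈ range (min m m' + 1)) => am_gm i
  rw [← sum_div, sum_add_distrib] at h
  linarith [sq_sum_le hm (min_le_left _ _), sq_sum_le hm' (min_le_right _ _)]

end Multichoose

lemma sum_le_sum_of_forall_exists {α β : Type*} {S : Finset α} {R : Finset β}
    {f : α → ℝ} {g : β → ℝ} (π : β → α) (hg : ∀ b ∈ R, 0 ≤ g b)
    (h : ∀ a ∈ S, ∃ b ∈ R, π b = a ∧ f a ≤ g b) :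
    ∑ a ∈ S, f a ≤ ∑ b ∈ R, g b := by
  classical
  have fiber_nonneg : ∀ a, 0 ≤ ∑ b ∈ R with π b = a, g b := fun a =>
    sum_nonneg fun b hb => hg b (mem_filter.mp hb).1
  calc ∑ a ∈ S, f a ≤ ∑ a ∈ S, ∑ b ∈ R with π b = a, g b := by
        gcongr with a ha
        obtain ⟨b, hb, rfl, hab⟩ := h a ha
        exact hab.trans (single_le_sum (fun b hb => hg b (mem_filter.mp hb).1)
          (mem_filter.mpr ⟨hb, rfl⟩))
    _ ≤ ∑ b ∈ R, g b := sum_fiberwise_le_sum_of_sum_fiber_nonneg fun a _ => fiber_nonneg a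

section RepresentationSums

/-- The `r`-element sets of integers exceeding `T` whose sum is `m`. -/
noncomputable def setsAbove (T : ℝ) (r m : ℕ) : Finset (Finset ℕ) :=
  {A ∈ powersetCard r (range (m + 1)) | ∑ y ∈ A, y = m ∧ ∀ y ∈ A, T < y}

/-- The number of representations of `m` as a sum of `r` distinct integers exceeding `T`,
each representation weighted by the product of the values of `f` at its summands. -/
noncomputable def reprSum (f : ℕ → ℝ) (T : ℝ) (r m : ℕ) : ℝ :=
  ∑ A ∈ setsAbove T r m, ∏ y ∈ A, f y

variable {f : ℕ → ℝ} {T : ℝ} {r m : ℕ} {A B : Finset ℕ}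

lemma mem_setsAbove : A ∈ setsAbove T r m ↔ #A = r ∧ ∑ y ∈ A, y = m ∧ ∀ y ∈ A, T < y := by
  have : ∑ y ∈ A, y = m → A ⊆ range (m + 1) := by
    rintro rfl y hy
    exact mem_range_succ_iff.mpr (single_le_sum_of_canonicallyOrdered (f := id) hy)
  simp only [setsAbove, mem_filter, mem_powersetCard]
  tauto

lemma reprSum_nonneg (hf : ∀ y, 0 ≤ f y) (T : ℝ) (r m : ℕ) : 0 ≤ reprSum f T r m :=
  sum_nonneg fun _ _ => prod_nonneg fun y _ => hf y

lemma reprSum_zero (f : ℕ → ℝ) (T : ℝ) (m : ℕ) :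
    reprSum f T 0 m = if m = 0 then 1 else 0 := by
  have : setsAbove T 0 m = if m = 0 then {∅} else ∅ := by
    ext A
    rw [mem_setsAbove, card_eq_zero]
    split_ifs <;> simp <;> grind
  unfold reprSum
  rw [this]
  split_ifs <;> simp

lemma succ_mul_reprSum_le (hf : ∀ y, 0 ≤ f y) (T : ℝ) (r m : ℕ) :
    (r + 1) * reprSum f T (r + 1) m ≤ ∑ p ∈ antidiagonal m, f p.1 * reprSum f T r p.2 := by
  calc (r + 1) * reprSum f T (r + 1) m
      = ∑ A ∈ setsAbove T (r + 1) m, ∑ y ∈ A, f y * ∏ z ∈ A.erase y, f z := by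
        rw [reprSum, mul_sum]
        refine sum_congr rfl fun A hA => ?_
        rw [sum_congr rfl fun y hy => mul_prod_erase A f hy, sum_const, (mem_setsAbove.mp hA).1,
          nsmul_eq_mul, Nat.cast_succ]
    _ = ∑ a ∈ (setsAbove T (r + 1) m).sigma id, f a.2 * ∏ z ∈ a.1.erase a.2, f z := by
        rw [sum_sigma]; rfl
    _ ≤ ∑ b ∈ (antidiagonal m).sigma fun p => setsAbove T r p.2, f b.1.1 * ∏ z ∈ b.2, f z := by
        refine sum_le_sum_of_forall_exists (fun b => ⟨insert b.1.1 b.2, b.1.1⟩)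
          (fun b _ => mul_nonneg (hf _) (prod_nonneg fun z _ => hf z)) ?_
        rintro ⟨A, y⟩ hAy
        obtain ⟨hA, hy⟩ : A ∈ setsAbove T (r + 1) m ∧ y ∈ A := mem_sigma.mp hAy
        obtain ⟨hcard, hsum, hT⟩ := mem_setsAbove.mp hA
        refine ⟨⟨(y, ∑ z ∈ A.erase y, z), A.erase y⟩, mem_sigma.mpr ⟨?_, mem_setsAbove.mpr ⟨?_, rfl,
          fun z hz => hT z (mem_of_mem_erase hz)⟩⟩, by simp only [insert_erase hy], le_rfl⟩
        · exact mem_antidiagonal.mpr ((add_sum_erase A _ hy).trans hsum)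
        · exact (card_erase_of_mem hy).trans (by rw [hcard, Nat.add_sub_cancel])
    _ = ∑ p ∈ antidiagonal m, f p.1 * reprSum f T r p.2 := by
        rw [sum_sigma]
        simp only [reprSum, mul_sum]

lemma reprSum_le_pow_mul {g : ℕ → ℝ} {κ : ℝ} (hf : ∀ y, 0 ≤ f y)
    (hfg : ∀ y : ℕ, T < y → f y ≤ κ * g y) (r m : ℕ) :
    reprSum f T r m ≤ κ ^ r * reprSum g T r m := by
  rw [reprSum, reprSum, mul_sum]
  refine sum_le_sum fun A hA => ?_
  obtain ⟨hcard, -, hT⟩ := mem_setsAbove.mp hA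
  calc ∏ y ∈ A, f y ≤ ∏ y ∈ A, κ * g y :=
        prod_le_prod (fun y _ => hf y) fun y hy => hfg y (hT y hy)
    _ = κ ^ r * ∏ y ∈ A, g y := by rw [prod_mul_distrib, prod_const, hcard]

lemma mem_setsAbove_of_subset (hA : A ∈ setsAbove T r m) (hBA : B ⊆ A) :
    B ∈ setsAbove T #B (∑ y ∈ B, y) :=
  mem_setsAbove.mpr ⟨rfl, rfl, fun y hy => (mem_setsAbove.mp hA).2.2 y (hBA hy)⟩

lemma sdiff_mem_setsAbove (hA : A ∈ setsAbove T r m) (B : Finset ℕ) :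
    A \ B ∈ setsAbove T (r - #(A ∩ B)) (m - ∑ y ∈ A ∩ B, y) := by
  obtain ⟨hcard, hsum, hT⟩ := mem_setsAbove.mp hA
  have hcard' := card_sdiff_add_card_inter A B
  have hsum' := sum_inter_add_sum_sdiff A B fun y : ℕ => y
  exact mem_setsAbove.mpr ⟨by lia, by lia, fun y hy => hT y (sdiff_subset hy)⟩

lemma prod_union_eq_prod_inter_mul {ι M : Type*} [DecidableEq ι] [CommMonoid M] (f : ι → M)
    (A B : Finset ι) :
    ∏ y ∈ A ∪ B, f y = (∏ y ∈ A ∩ B, f y) * ((∏ y ∈ A \ B, f y) * ∏ y ∈ B \ A, f y) := by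
  rw [← mul_assoc, prod_inter_mul_prod_sdiff, ← prod_union disjoint_sdiff,
    union_sdiff_self_eq_union]

-- A pair `(A, A')` is recovered from `A ∩ A'`, `A \ A'` and `A' \ A`.
lemma sum_overlapping_prod_union_le (hf : ∀ y, 0 ≤ f y) (T : ℝ) (s m m' : ℕ) :
    ∑ p ∈ setsAbove T s m ×ˢ setsAbove T s m' with p.1 ≠ p.2 ∧ ¬ Disjoint p.1 p.2,
        ∏ y ∈ p.1 ∪ p.2, f y ≤
      ∑ r ∈ Icc 1 (s - 1), ∑ i ∈ range (min m m' + 1),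
        reprSum f T (s - r) i * (reprSum f T r (m - i) * reprSum f T r (m' - i)) := by
  calc _ ≤ ∑ b ∈ (Icc 1 (s - 1) ×ˢ range (min m m' + 1)).sigma fun u =>
          setsAbove T (s - u.1) u.2 ×ˢ setsAbove T u.1 (m - u.2) ×ˢ setsAbove T u.1 (m' - u.2),
        (∏ y ∈ b.2.1, f y) * ((∏ y ∈ b.2.2.1, f y) * ∏ y ∈ b.2.2.2, f y) := by
        have prod_nn : ∀ A : Finset ℕ, 0 ≤ ∏ y ∈ A, f y := fun A => prod_nonneg fun y _ => hf y
        refine sum_le_sum_of_forall_exists (fun b => (b.2.2.1 ∪ b.2.1, b.2.2.2 ∪ b.2.1))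
          (fun b _ => mul_nonneg (prod_nn _) (mul_nonneg (prod_nn _) (prod_nn _)))
          fun ⟨A, A'⟩ hp => ?_
        simp only [mem_filter, mem_product] at hp
        obtain ⟨⟨hA, hA'⟩, hne, hdisj⟩ := hp
        obtain ⟨hcard, hsum, -⟩ := mem_setsAbove.mp hA
        obtain ⟨hcard', hsum', -⟩ := mem_setsAbove.mp hA'
        have hpos : 0 < #(A ∩ A') := card_pos.mpr (not_disjoint_iff_nonempty_inter.mp hdisj)
        have hlt : #(A ∩ A') < s := hcard ▸ card_lt_card (inter_subset_left.ssubset_of_ne fun h =>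
          hne (eq_of_subset_of_card_le (inter_eq_left.mp h) (hcard'.trans hcard.symm).le))
        have hle : ∑ y ∈ A ∩ A', y ≤ m := hsum ▸ sum_le_sum_of_subset inter_subset_left
        have hle' : ∑ y ∈ A ∩ A', y ≤ m' := hsum' ▸ sum_le_sum_of_subset inter_subset_right
        refine ⟨⟨(s - #(A ∩ A'), ∑ y ∈ A ∩ A', y), A ∩ A', A \ A', A' \ A⟩, ?_, ?_,
          (prod_union_eq_prod_inter_mul f A A').le⟩
        · exact mem_sigma.mpr ⟨mem_product.mpr ⟨mem_Icc.mpr (by lia), mem_range.mpr (by lia)⟩,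
            mem_product.mpr ⟨by simpa only [Nat.sub_sub_self hlt.le] using
              mem_setsAbove_of_subset hA inter_subset_left, mem_product.mpr
              ⟨sdiff_mem_setsAbove hA A', inter_comm A' A ▸ sdiff_mem_setsAbove hA' A⟩⟩⟩
        · exact Prod.ext (sdiff_union_inter A A')
            (by rw [inter_comm, sdiff_union_inter])
    _ = _ := by
        simp only [reprSum, sum_sigma, sum_product, ← mul_sum, ← sum_mul]

lemma reprSum_multichoose_le {θ : ℝ} (hθ : 0 ≤ θ) (T : ℝ) (r m : ℕ) :
    reprSum (multichoose θ) T r m ≤ multichoose (r * θ) m / r.factorial := by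
  induction r generalizing m with
  | zero => rw [reprSum_zero]; rcases m with - | m <;> simp
  | succ r ih =>
    rw [Nat.factorial_succ, Nat.mul_comm, Nat.cast_mul, Nat.cast_succ, ← div_div,
      le_div_iff₀' (by positivity)]
    calc (r + 1) * reprSum (multichoose θ) T (r + 1) m
        ≤ ∑ p ∈ antidiagonal m, multichoose θ p.1 * reprSum (multichoose θ) T r p.2 :=
          succ_mul_reprSum_le (multichoose_nonneg hθ) T r m
      _ ≤ ∑ p ∈ antidiagonal m, multichoose θ p.1 * (multichoose (r * θ) p.2 / r.factorial) := by
          gcongr with p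
          · exact multichoose_nonneg hθ _
          · exact ih p.2
      _ = multichoose ((r + 1) * θ) m / r.factorial := by
          simp only [← mul_div_assoc]
          rw [← sum_div, sum_antidiagonal_multichoose_mul, add_one_mul, add_comm θ]

end RepresentationSums

section InclusionProbability

/-- The probability `θ x^{θ-1}` that `x` belongs to the random set of pseudo `s`-th powers,
where `θ = 1/s`. The value at `x = 0` is irrelevant. -/
noncomputable def inclusionProb (θ : ℝ) (x : ℕ) : ℝ := θ * (x : ℝ) ^ (-1 + θ)

/-- The constant in the comparison of `inclusionProb θ` with `multichoose θ` above `T`. It tends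
to `Γ(θ + 1)` as `T → ∞`. -/
noncomputable def comparisonConst (θ T : ℝ) : ℝ := (1 + T⁻¹) * Real.Gamma (θ + 1)

/-- The coefficient in the bound for pairs of intersecting representations of `m` and `m'` as
sums of `s` integers exceeding `T`; the index `r` is the number of elements of either
representation outside their intersection. -/
noncomputable def overlapConst (s : ℕ) (θ T : ℝ) : ℝ :=
  ∑ r ∈ Icc 1 (s - 1), comparisonConst θ T ^ (s + r) * Real.Gamma (r * θ - θ / 2)

variable {θ T : ℝ}

lemma inclusionProb_nonneg (hθ : 0 ≤ θ) (x : ℕ) : 0 ≤ inclusionProb θ x := by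
  unfold inclusionProb; positivity

lemma inclusionProb_le_one (hθ₁ : θ ≤ 1) (x : ℕ) : inclusionProb θ x ≤ 1 := by
  refine mul_le_one₀ hθ₁ (by positivity) ?_
  rcases x.eq_zero_or_pos with rfl | hx
  · simpa using Real.zero_rpow_le_one (-1 + θ)
  · exact Real.rpow_le_one_of_one_le_of_nonpos (by exact_mod_cast hx) (by linarith)

lemma sum_Icc_inclusionProb_le (hθ₀ : 0 < θ) (hθ₁ : θ ≤ 1) (N : ℕ) :
    ∑ x ∈ Icc 1 N, inclusionProb θ x ≤ (N : ℝ) ^ θ := by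
  induction N with
  | zero => simp [hθ₀.ne']
  | succ N ih =>
    have hN : (0 : ℝ) < N + 1 := by positivity
    have hN_eq : (N : ℝ) = (N + 1) * (1 + -((N : ℝ) + 1)⁻¹) := by field_simp; ring
    have bernoulli : (1 + -((N : ℝ) + 1)⁻¹) ^ θ ≤ 1 + θ * -((N : ℝ) + 1)⁻¹ :=
      rpow_one_add_le_one_add_mul_self (neg_le_neg (inv_le_one_of_one_le₀ (by simp))) hθ₀.le hθ₁
    have increment : (N : ℝ) ^ θ ≤ (N + 1) ^ θ - inclusionProb θ (N + 1) :=
      calc (N : ℝ) ^ θ = (N + 1) ^ θ * (1 + -((N : ℝ) + 1)⁻¹) ^ θ := by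
            rw [← Real.mul_rpow hN.le (nonneg_of_mul_nonneg_right (hN_eq ▸ N.cast_nonneg) hN),
              ← hN_eq]
        _ ≤ (N + 1) ^ θ * (1 + θ * -((N : ℝ) + 1)⁻¹) := by gcongr
        _ = (N + 1) ^ θ - inclusionProb θ (N + 1) := by
            rw [inclusionProb, Nat.cast_succ, Real.rpow_add hN, Real.rpow_neg_one]; ring
    rw [sum_Icc_succ_top (by lia), Nat.cast_succ]
    linarith

lemma comparisonConst_pos (hθ : 0 < θ) (hT : 0 < T) : 0 < comparisonConst θ T :=
  mul_pos (by positivity) (Real.Gamma_pos_of_pos (by positivity))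

lemma inclusionProb_le_mul_multichoose (hθ₀ : 0 < θ) (hθ₁ : θ ≤ 1) (hT : 0 < T) {y : ℕ}
    (hy : T < y) : inclusionProb θ y ≤ comparisonConst θ T * multichoose θ y := by
  have hy₀ : (0 : ℝ) < y := hT.trans hy
  calc inclusionProb θ y = θ * (y ^ θ * (y : ℝ)⁻¹) := by
        rw [inclusionProb, add_comm, Real.rpow_add hy₀, Real.rpow_neg_one]
    _ ≤ θ * ((y + 1) ^ θ * (y : ℝ)⁻¹) := by gcongr; linarith
    _ = θ * ((1 + (y : ℝ)⁻¹) * (y + 1) ^ (θ - 1)) := by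
        rw [Real.rpow_sub_one (by positivity)]; field_simp
    _ ≤ θ * ((1 + T⁻¹) * (Real.Gamma θ * multichoose θ y)) := by
        gcongr
        exact rpow_le_Gamma_mul_multichoose hθ₀ hθ₁ y
    _ = comparisonConst θ T * multichoose θ y := by
        rw [comparisonConst, Real.Gamma_add_one hθ₀.ne']; ring

lemma reprSum_inclusionProb_le (hθ₀ : 0 < θ) (hθ₁ : θ ≤ 1) (hT : 0 < T) (r m : ℕ) :
    reprSum (inclusionProb θ) T r m ≤
      comparisonConst θ T ^ r * (multichoose (r * θ) m / r.factorial) := by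
  have hκ := comparisonConst_pos hθ₀ hT
  calc reprSum (inclusionProb θ) T r m
      ≤ comparisonConst θ T ^ r * reprSum (multichoose θ) T r m :=
        reprSum_le_pow_mul (inclusionProb_nonneg hθ₀.le)
          (fun _ => inclusionProb_le_mul_multichoose hθ₀ hθ₁ hT) r m
    _ ≤ comparisonConst θ T ^ r * (multichoose (r * θ) m / r.factorial) := by
        gcongr
        exact reprSum_multichoose_le hθ₀.le T r m

lemma reprSum_inclusionProb_le_pow_mul (hθ₀ : 0 < θ) (hθ₁ : θ ≤ 1) (hT : 0 < T) (r m : ℕ) :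
    reprSum (inclusionProb θ) T r m ≤ comparisonConst θ T ^ r * multichoose (r * θ) m := by
  have := comparisonConst_pos hθ₀ hT
  refine (reprSum_inclusionProb_le hθ₀ hθ₁ hT r m).trans ?_
  gcongr
  exact div_le_self (multichoose_nonneg (by positivity) m) (Nat.one_le_cast.mpr r.factorial_pos)

variable {s : ℕ}

lemma pos_of_natCast_mul_eq_one (hsθ : s * θ = 1) : 0 < θ :=
  pos_of_mul_pos_right (hsθ ▸ one_pos) s.cast_nonneg

lemma le_one_of_natCast_mul_eq_one (hsθ : s * θ = 1) : θ ≤ 1 := by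
  have hs : s ≠ 0 := by rintro rfl; simp at hsθ
  calc θ ≤ s * θ := le_mul_of_one_le_left (pos_of_natCast_mul_eq_one hsθ).le
        (Nat.one_le_cast.mpr (Nat.one_le_iff_ne_zero.mpr hs))
    _ = 1 := hsθ

lemma reprSum_inclusionProb_le_div_factorial (hsθ : s * θ = 1) (hT : 0 < T) (m : ℕ) :
    reprSum (inclusionProb θ) T s m ≤ comparisonConst θ T ^ s / s.factorial := by
  simpa only [hsθ, Ring.multichoose_one, mul_one_div] using reprSum_inclusionProb_le
    (pos_of_natCast_mul_eq_one hsθ) (le_one_of_natCast_mul_eq_one hsθ) hT s m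

lemma sum_reprSum_inclusionProb_mul_mul_le (hsθ : s * θ = 1) (hT : 0 < T) {r : ℕ} (hr : 1 ≤ r)
    (hrs : r < s) {k m m' : ℕ} (hm : k ≤ m) (hm' : k ≤ m') :
    ∑ i ∈ range (min m m' + 1), reprSum (inclusionProb θ) T (s - r) i *
        (reprSum (inclusionProb θ) T r (m - i) * reprSum (inclusionProb θ) T r (m' - i)) ≤
      comparisonConst θ T ^ (s + r) * Real.Gamma (r * θ - θ / 2) *
        ((k : ℝ) + 1) ^ (-(θ / 2)) := by
  have hθ₀ := pos_of_natCast_mul_eq_one hsθ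
  have hκ := comparisonConst_pos hθ₀ hT
  have hsr : ((s - r : ℕ) : ℝ) * θ = 1 - r * θ := by rw [Nat.cast_sub hrs.le, sub_mul, hsθ]
  have hθ_le : ∀ j : ℕ, 1 ≤ j → θ ≤ j * θ := fun j hj =>
    le_mul_of_one_le_left hθ₀.le (Nat.one_le_cast.mpr hj)
  have hr_le := hθ_le r hr
  have hsr_le := hθ_le (s - r) (by lia)
  have reprSum_nn := reprSum_nonneg (inclusionProb_nonneg hθ₀.le) T
  have reprSum_le := reprSum_inclusionProb_le_pow_mul hθ₀ (le_one_of_natCast_mul_eq_one hsθ) hT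
  have bound_nn : ∀ j l : ℕ, 0 ≤ comparisonConst θ T ^ j * multichoose (j * θ) l := fun j l =>
    (reprSum_nn j l).trans (reprSum_le j l)
  calc ∑ i ∈ range (min m m' + 1), reprSum (inclusionProb θ) T (s - r) i *
        (reprSum (inclusionProb θ) T r (m - i) * reprSum (inclusionProb θ) T r (m' - i))
      ≤ ∑ i ∈ range (min m m' + 1),
        comparisonConst θ T ^ (s - r) * multichoose ((s - r : ℕ) * θ) i *
        (comparisonConst θ T ^ r * multichoose (r * θ) (m - i) *
          (comparisonConst θ T ^ r * multichoose (r * θ) (m' - i))) := by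
        gcongr <;> apply_rules [reprSum_le, reprSum_nn, bound_nn, mul_nonneg]
    _ = comparisonConst θ T ^ (s + r) * ∑ i ∈ range (min m m' + 1), multichoose (1 - r * θ) i *
          (multichoose (r * θ) (m - i) * multichoose (r * θ) (m' - i)) := by
        rw [show s + r = s - r + r + r by lia, pow_add, pow_add, mul_sum, hsr]
        exact sum_congr rfl fun _ _ => by ring
    _ ≤ comparisonConst θ T ^ (s + r) * Real.Gamma (r * θ - θ / 2) *
          ((k : ℝ) + 1) ^ (-(θ / 2)) := by
        rw [mul_assoc]
        gcongr
        exact sum_multichoose_mul_mul_le (by linarith) (by linarith) (by linarith) hm hm'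

lemma sum_overlapping_prod_inclusionProb_le (hsθ : s * θ = 1) (hT : 0 < T) {k m m' : ℕ}
    (hm : k ≤ m) (hm' : k ≤ m') :
    ∑ p ∈ setsAbove T s m ×ˢ setsAbove T s m' with p.1 ≠ p.2 ∧ ¬ Disjoint p.1 p.2,
        ∏ y ∈ p.1 ∪ p.2, inclusionProb θ y ≤
      overlapConst s θ T * ((k : ℝ) + 1) ^ (-(θ / 2)) := by
  refine (sum_overlapping_prod_union_le
    (inclusionProb_nonneg (pos_of_natCast_mul_eq_one hsθ).le) T s m m').trans ?_
  rw [overlapConst, sum_mul]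
  gcongr with r hr
  obtain ⟨hr₁, hrs⟩ := mem_Icc.mp hr
  exact sum_reprSum_inclusionProb_mul_mul_le hsθ hT hr₁ (by lia) hm hm'

lemma overlapConst_nonneg (hθ : 0 < θ) (hT : 0 < T) (s : ℕ) : 0 ≤ overlapConst s θ T := by
  refine sum_nonneg fun r hr => ?_
  have hr' : θ ≤ r * θ := le_mul_of_one_le_left hθ.le (Nat.one_le_cast.mpr (mem_Icc.mp hr).1)
  exact mul_nonneg (pow_nonneg (comparisonConst_pos hθ hT).le _)
    (Real.Gamma_pos_of_pos (by linarith)).le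

lemma sum_inclusionProb_mul_reprSum_sq_le (hsθ : s * θ = 1) (hT : 0 < T) (n : ℕ) :
    ∑ x ∈ Icc 1 ⌊T⌋₊, inclusionProb θ x * reprSum (inclusionProb θ) T s (n - x) ^ 2 ≤
      T ^ θ * (comparisonConst θ T ^ s / s.factorial) ^ 2 := by
  have hθ₀ := pos_of_natCast_mul_eq_one hsθ
  have inclusionProb_nn := inclusionProb_nonneg hθ₀.le
  calc ∑ x ∈ Icc 1 ⌊T⌋₊, inclusionProb θ x * reprSum (inclusionProb θ) T s (n - x) ^ 2
      ≤ ∑ x ∈ Icc 1 ⌊T⌋₊, inclusionProb θ x * (comparisonConst θ T ^ s / s.factorial) ^ 2 := by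
        gcongr with x
        · exact inclusionProb_nn x
        · exact reprSum_nonneg inclusionProb_nn T s (n - x)
        · exact reprSum_inclusionProb_le_div_factorial hsθ hT (n - x)
    _ = (∑ x ∈ Icc 1 ⌊T⌋₊, inclusionProb θ x) * (comparisonConst θ T ^ s / s.factorial) ^ 2 :=
        (sum_mul ..).symm
    _ ≤ T ^ θ * (comparisonConst θ T ^ s / s.factorial) ^ 2 := by
        gcongr
        calc ∑ x ∈ Icc 1 ⌊T⌋₊, inclusionProb θ x ≤ (⌊T⌋₊ : ℝ) ^ θ :=
              sum_Icc_inclusionProb_le hθ₀ (le_one_of_natCast_mul_eq_one hsθ) _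
          _ ≤ T ^ θ := by gcongr; exact Nat.floor_le hT.le

lemma sum_sum_overlapping_prod_inclusionProb_le (hsθ : s * θ = 1) (hT : 0 < T) {n : ℕ}
    (hTn : T ≤ n / 2) :
    ∑ x ∈ Icc 1 ⌊T⌋₊, ∑ x' ∈ Icc 1 ⌊T⌋₊,
        ∑ p ∈ setsAbove T s (n - x) ×ˢ setsAbove T s (n - x') with
          p.1 ≠ p.2 ∧ ¬ Disjoint p.1 p.2, ∏ y ∈ p.1 ∪ p.2, inclusionProb θ y ≤
      T ^ 2 * (n / 2 : ℝ) ^ (-(θ / 2)) * overlapConst s θ T := by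
  have hθ₀ := pos_of_natCast_mul_eq_one hsθ
  have hE := overlapConst_nonneg hθ₀ hT s
  have hfloor : (⌊T⌋₊ : ℝ) ≤ T := Nat.floor_le hT.le
  have hn : (n / 2 : ℝ) ≤ (n - ⌊T⌋₊ : ℕ) + 1 := by
    have : (n : ℝ) ≤ (n - ⌊T⌋₊ : ℕ) + ⌊T⌋₊ := by exact_mod_cast (by lia)
    linarith
  calc ∑ x ∈ Icc 1 ⌊T⌋₊, ∑ x' ∈ Icc 1 ⌊T⌋₊,
        ∑ p ∈ setsAbove T s (n - x) ×ˢ setsAbove T s (n - x') with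
          p.1 ≠ p.2 ∧ ¬ Disjoint p.1 p.2, ∏ y ∈ p.1 ∪ p.2, inclusionProb θ y
      ≤ ∑ x ∈ Icc 1 ⌊T⌋₊, ∑ x' ∈ Icc 1 ⌊T⌋₊,
          overlapConst s θ T * (((n - ⌊T⌋₊ : ℕ) : ℝ) + 1) ^ (-(θ / 2)) := by
        gcongr with x hx x' hx'
        exact sum_overlapping_prod_inclusionProb_le hsθ hT
          (Nat.sub_le_sub_left (mem_Icc.mp hx).2 n) (Nat.sub_le_sub_left (mem_Icc.mp hx').2 n)
    _ = (⌊T⌋₊ : ℝ) ^ 2 *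
          (overlapConst s θ T * (((n - ⌊T⌋₊ : ℕ) : ℝ) + 1) ^ (-(θ / 2))) := by
        simp only [sum_const, Nat.card_Icc, Nat.add_sub_cancel, nsmul_eq_mul]; ring
    _ ≤ T ^ 2 * (overlapConst s θ T * (n / 2 : ℝ) ^ (-(θ / 2))) := by
        gcongr ?_ ^ 2 * (_ * ?_)
        exact Real.rpow_le_rpow_of_nonpos (hT.trans_le hTn) hn (by linarith)
    _ = T ^ 2 * (n / 2 : ℝ) ^ (-(θ / 2)) * overlapConst s θ T := by ring

end InclusionProbability

section OverlappingPairs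

/-- The bound `(c log n)^s` separating the smallest element of `ω ∈ Ω_n` from the others. -/
noncomputable def cutoff (s : ℕ) (c : ℝ) (n : ℕ) : ℝ := (c * Real.log n) ^ s

variable {s n : ℕ} {c : ℝ}

lemma DeltaN_eq_sum_prod_inclusionProb (s : ℕ) (c : ℝ) (n : ℕ) :
    DeltaN s c n = ∑ p ∈ OmegaN s c n ×ˢ OmegaN s c n with p.1 ≠ p.2 ∧ (p.1 ∩ p.2).Nonempty,
      ∏ x ∈ p.1 ∪ p.2, inclusionProb (1 / s) x := by
  simp only [DeltaN, inclusionProb, prod_mul_distrib, prod_const, one_div, inv_pow]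

lemma exists_insert_eq_of_mem_OmegaN {ω : Finset ℕ} (hω : ω ∈ OmegaN s c n) :
    ∃ x A, x ∈ Icc 1 n ∧ x < cutoff s c n ∧ A ∈ setsAbove (cutoff s c n) s (n - x) ∧
      insert x A = ω := by
  simp only [OmegaN, mem_filter, mem_powersetCard, id_eq] at hω
  obtain ⟨⟨hsub, hcard⟩, hsum, hsmall, hne⟩ := hω
  obtain ⟨x, hx⟩ := card_eq_one.mp hsmall
  have mem_small : ∀ y, y ∈ ω ∧ (y : ℝ) < cutoff s c n ↔ y = x := fun y => by
    rw [← mem_singleton, ← hx, mem_filter, cutoff]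
  obtain ⟨hxω, hxT⟩ := (mem_small x).mpr rfl
  refine ⟨x, ω.erase x, hsub hxω, hxT, mem_setsAbove.mpr ⟨?_, ?_, fun y hy => ?_⟩, insert_erase hxω⟩
  · rw [card_erase_of_mem hxω, hcard, Nat.add_sub_cancel]
  · have := add_sum_erase ω (fun y => y) hxω
    lia
  · obtain ⟨hyx, hyω⟩ := mem_erase.mp hy
    exact (not_lt.mp fun h => hyx ((mem_small y).mp ⟨hyω, h⟩)).lt_of_ne' (hne y hyω)

lemma eq_of_insert_inter_insert_nonempty {T : ℝ} {x x' : ℕ} {A A' : Finset ℕ} (hx : x < T)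
    (hx' : x' < T) (hA : ∀ y ∈ A, T < y) (hA' : ∀ y ∈ A', T < y) (hdisj : Disjoint A A')
    (h : (insert x A ∩ insert x' A').Nonempty) : x = x' := by
  obtain ⟨y, hy⟩ := h
  simp only [mem_inter, mem_insert] at hy
  rcases hy with ⟨rfl | hyA, rfl | hyA'⟩
  · rfl
  · exact absurd hx (hA' _ hyA').not_gt
  · exact absurd hx' (hA _ hyA).not_gt
  · exact absurd hyA' (disjoint_left.mp hdisj hyA)

lemma prod_insert_union_insert {ι M : Type*} [DecidableEq ι] [CommMonoid M] (f : ι → M) {x : ι}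
    {A A' : Finset ι} (hx : x ∉ A) (hx' : x ∉ A') (hdisj : Disjoint A A') :
    ∏ y ∈ insert x A ∪ insert x A', f y = f x * ((∏ y ∈ A, f y) * ∏ y ∈ A', f y) := by
  rw [← insert_union_distrib, prod_insert (by simp [hx, hx']), prod_union hdisj]

lemma exists_insert_eq_of_mem_OmegaN_of_inter_nonempty {ω ω' : Finset ℕ} (hω : ω ∈ OmegaN s c n)
    (hω' : ω' ∈ OmegaN s c n) (hne : ω ≠ ω') (hinter : (ω ∩ ω').Nonempty) :
    ∃ x ∈ Icc 1 ⌊cutoff s c n⌋₊, ∃ x' ∈ Icc 1 ⌊cutoff s c n⌋₊,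
      ∃ A ∈ setsAbove (cutoff s c n) s (n - x), ∃ A' ∈ setsAbove (cutoff s c n) s (n - x'),
        insert x A = ω ∧ insert x' A' = ω' ∧
          (x = x' ∧ x ∉ A ∧ x ∉ A' ∧ Disjoint A A' ∨ A ≠ A' ∧ ¬ Disjoint A A') := by
  obtain ⟨x, A, hx, hxT, hA, rfl⟩ := exists_insert_eq_of_mem_OmegaN hω
  obtain ⟨x', A', hx', hxT', hA', rfl⟩ := exists_insert_eq_of_mem_OmegaN hω'
  rw [mem_Icc] at hx hx'
  obtain ⟨-, hsum, hTA⟩ := mem_setsAbove.mp hA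
  obtain ⟨-, hsum', hTA'⟩ := mem_setsAbove.mp hA'
  refine ⟨x, mem_Icc.mpr ⟨hx.1, Nat.le_floor hxT.le⟩, x', mem_Icc.mpr ⟨hx'.1, Nat.le_floor hxT'.le⟩,
    A, hA, A', hA', rfl, rfl, ?_⟩
  by_cases hdisj : Disjoint A A'
  · obtain rfl := eq_of_insert_inter_insert_nonempty hxT hxT' hTA hTA' hdisj hinter
    exact .inl ⟨rfl, fun h => hxT.not_gt (hTA x h), fun h => hxT.not_gt (hTA' x h), hdisj⟩
  · refine .inr ⟨?_, hdisj⟩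
    rintro rfl
    exact hne (by rw [show x = x' by lia])

lemma sum_OmegaN_prod_union_le {f : ℕ → ℝ} (hf₀ : ∀ y, 0 ≤ f y) (hf₁ : ∀ y, f y ≤ 1) (s : ℕ)
    (c : ℝ) (n : ℕ) :
    ∑ p ∈ OmegaN s c n ×ˢ OmegaN s c n with p.1 ≠ p.2 ∧ (p.1 ∩ p.2).Nonempty,
        ∏ y ∈ p.1 ∪ p.2, f y ≤
      ∑ x ∈ Icc 1 ⌊cutoff s c n⌋₊, f x * reprSum f (cutoff s c n) s (n - x) ^ 2 +
      ∑ x ∈ Icc 1 ⌊cutoff s c n⌋₊, ∑ x' ∈ Icc 1 ⌊cutoff s c n⌋₊,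
        ∑ p ∈ setsAbove (cutoff s c n) s (n - x) ×ˢ setsAbove (cutoff s c n) s (n - x') with
          p.1 ≠ p.2 ∧ ¬ Disjoint p.1 p.2, ∏ y ∈ p.1 ∪ p.2, f y := by
  set T := cutoff s c n
  have prod_nn : ∀ A : Finset ℕ, 0 ≤ ∏ y ∈ A, f y := fun A => prod_nonneg fun y _ => hf₀ y
  let disjointPairs := (Icc 1 ⌊T⌋₊).sigma fun x =>
    setsAbove T s (n - x) ×ˢ setsAbove T s (n - x)
  let overlappingPairs := (Icc 1 ⌊T⌋₊ ×ˢ Icc 1 ⌊T⌋₊).sigma fun u =>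
    {p ∈ setsAbove T s (n - u.1) ×ˢ setsAbove T s (n - u.2) | p.1 ≠ p.2 ∧ ¬ Disjoint p.1 p.2}
  calc _ ≤ ∑ b ∈ disjointPairs.disjSum overlappingPairs,
        b.elim (fun u => f u.1 * ((∏ y ∈ u.2.1, f y) * ∏ y ∈ u.2.2, f y))
          fun u => ∏ y ∈ u.2.1 ∪ u.2.2, f y := by
        refine sum_le_sum_of_forall_exists
          (Sum.elim (fun u => (insert u.1 u.2.1, insert u.1 u.2.2))
            fun u => (insert u.1.1 u.2.1, insert u.1.2 u.2.2)) ?_ fun ⟨ω, ω'⟩ hp => ?_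
        · rintro (u | u) -
          exacts [mul_nonneg (hf₀ _) (mul_nonneg (prod_nn _) (prod_nn _)), prod_nn _]
        simp only [mem_filter, mem_product] at hp
        obtain ⟨⟨hω, hω'⟩, hne, hinter⟩ := hp
        obtain ⟨x, hx, x', hx', A, hA, A', hA', rfl, rfl, h⟩ :=
          exists_insert_eq_of_mem_OmegaN_of_inter_nonempty hω hω' hne hinter
        rcases h with ⟨rfl, hxA, hxA', hdisj⟩ | hAA'
        · exact ⟨.inl ⟨x, A, A'⟩,
            inl_mem_disjSum.mpr (mem_sigma.mpr ⟨hx, mem_product.mpr ⟨hA, hA'⟩⟩), rfl,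
            (prod_insert_union_insert f hxA hxA' hdisj).le⟩
        · exact ⟨.inr ⟨(x, x'), A, A'⟩, inr_mem_disjSum.mpr (mem_sigma.mpr
            ⟨mem_product.mpr ⟨hx, hx'⟩, mem_filter.mpr ⟨mem_product.mpr ⟨hA, hA'⟩, hAA'⟩⟩), rfl,
            prod_anti_set_of_le_one hf₀ hf₁
              (union_subset_union (subset_insert x A) (subset_insert x' A'))⟩
    _ = _ := by
        simp only [disjointPairs, overlappingPairs, sum_disjSum, Sum.elim_inl, Sum.elim_inr,
          sum_sigma, sum_product, ← mul_sum, ← sum_mul, reprSum, sq]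

lemma cutoff_rpow_one_div (hs : s ≠ 0) (hc : 0 ≤ c) (n : ℕ) :
    cutoff s c n ^ (1 / s : ℝ) = c * Real.log n := by
  rw [cutoff, one_div,
    Real.pow_rpow_inv_natCast (mul_nonneg hc (Real.log_natCast_nonneg n)) hs]

lemma DeltaN_nonneg (s : ℕ) (c : ℝ) (n : ℕ) : 0 ≤ DeltaN s c n := by
  unfold DeltaN
  positivity

lemma DeltaN_le (hs : s ≠ 0) (hc : 0 ≤ c) (hT : 0 < cutoff s c n) (hTn : cutoff s c n ≤ n / 2) :
    DeltaN s c n ≤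
      c * Real.log n * (comparisonConst (1 / s) (cutoff s c n) ^ s / s.factorial) ^ 2 +
      cutoff s c n ^ 2 * (n / 2 : ℝ) ^ (-(1 / s / 2) : ℝ) *
        overlapConst s (1 / s) (cutoff s c n) := by
  have hsθ : s * (1 / s : ℝ) = 1 := mul_one_div_cancel (Nat.cast_ne_zero.mpr hs)
  rw [DeltaN_eq_sum_prod_inclusionProb, ← cutoff_rpow_one_div hs hc]
  exact (sum_OmegaN_prod_union_le (inclusionProb_nonneg (by positivity))
    (inclusionProb_le_one (le_one_of_natCast_mul_eq_one hsθ)) s c n).trans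
    (add_le_add (sum_inclusionProb_mul_reprSum_sq_le hsθ hT n)
      (sum_sum_overlapping_prod_inclusionProb_le hsθ hT hTn))

end OverlappingPairs

section Asymptotics

variable {s : ℕ} {c : ℝ}

lemma lambdaS_eq_Gamma_add_one_pow_div (hs : s ≠ 0) :
    lambdaS s = Real.Gamma (1 / s + 1) ^ s / s.factorial := by
  rw [lambdaS, Real.Gamma_add_one (by positivity), mul_pow, one_div, inv_pow, ← div_div,
    div_eq_inv_mul (Real.Gamma _ ^ s)]

lemma tendsto_comparisonConst_atTop (θ : ℝ) :
    Tendsto (comparisonConst θ) atTop (nhds (Real.Gamma (θ + 1))) := by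
  have h := (tendsto_inv_atTop_zero.const_add (1 : ℝ)).mul_const (Real.Gamma (θ + 1))
  rw [add_zero, one_mul] at h
  exact h

lemma tendsto_overlapConst_atTop (s : ℕ) (θ : ℝ) :
    Tendsto (overlapConst s θ) atTop
      (nhds (∑ r ∈ Icc 1 (s - 1), Real.Gamma (θ + 1) ^ (s + r) * Real.Gamma (r * θ - θ / 2))) :=
  tendsto_finsetSum _ fun _ _ => ((tendsto_comparisonConst_atTop θ).pow _).mul_const _

lemma tendsto_log_natCast_atTop : Tendsto (fun n : ℕ => Real.log n) atTop atTop :=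
  Real.tendsto_log_atTop.comp tendsto_natCast_atTop_atTop

lemma tendsto_cutoff_atTop (hs : s ≠ 0) (hc : 0 < c) : Tendsto (cutoff s c) atTop atTop :=
  (tendsto_pow_atTop hs).comp (tendsto_log_natCast_atTop.const_mul_atTop hc)

lemma cutoff_isLittleO_rpow (s : ℕ) (c : ℝ) {ε : ℝ} (hε : 0 < ε) :
    cutoff s c =o[atTop] fun n : ℕ => (n : ℝ) ^ ε := by
  have h := ((isLittleO_log_rpow_rpow_atTop s hε).comp_tendsto
    tendsto_natCast_atTop_atTop).const_mul_left (c ^ s)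
  exact h.congr_left fun n => by simp [cutoff, mul_pow]

lemma eventually_cutoff_le_half (s : ℕ) (c : ℝ) : ∀ᶠ n : ℕ in atTop, cutoff s c n ≤ n / 2 := by
  filter_upwards [(cutoff_isLittleO_rpow s c one_pos).bound one_half_pos] with n hn
  rw [Real.rpow_one, Real.norm_natCast] at hn
  linarith [Real.le_norm_self (cutoff s c n)]

lemma tendsto_cutoff_sq_mul_rpow_neg (s : ℕ) (c : ℝ) {ε : ℝ} (hε : 0 < ε) :
    Tendsto (fun n : ℕ => cutoff s c n ^ 2 * (n / 2 : ℝ) ^ (-ε)) atTop (nhds 0) := by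
  have h := ((cutoff_isLittleO_rpow s c (half_pos hε)).tendsto_div_nhds_zero.pow 2).mul_const
    ((2 : ℝ) ^ ε)
  rw [zero_pow two_ne_zero, zero_mul] at h
  refine h.congr fun n => ?_
  rw [Real.rpow_neg (by positivity), Real.div_rpow (by positivity) zero_le_two, inv_div, div_pow,
    ← Real.rpow_mul_natCast n.cast_nonneg, Nat.cast_two, div_mul_cancel₀ _ two_ne_zero]
  ring

/-- A majorant of `Δ_n / log n`, valid for all sufficiently large `n`. -/
noncomputable def deltaMajorant (s : ℕ) (c : ℝ) (n : ℕ) : ℝ :=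
  c * (comparisonConst (1 / s) (cutoff s c n) ^ s / s.factorial) ^ 2 +
    cutoff s c n ^ 2 * (n / 2 : ℝ) ^ (-(1 / s / 2) : ℝ) * overlapConst s (1 / s) (cutoff s c n)

lemma eventually_DeltaN_div_log_le (hs : s ≠ 0) (hc : 0 < c) :
    ∀ᶠ n : ℕ in atTop, DeltaN s c n / Real.log n ≤ deltaMajorant s c n := by
  filter_upwards [tendsto_log_natCast_atTop.eventually_ge_atTop 1,
    (tendsto_cutoff_atTop hs hc).eventually_gt_atTop 0, eventually_cutoff_le_half s c]
    with n hlog hT hTn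
  have error_nn : 0 ≤ cutoff s c n ^ 2 * (n / 2 : ℝ) ^ (-(1 / s / 2) : ℝ) *
      overlapConst s (1 / s) (cutoff s c n) :=
    mul_nonneg (by positivity) (overlapConst_nonneg (by positivity) hT s)
  rw [div_le_iff₀ (by linarith), deltaMajorant, add_mul, mul_right_comm]
  exact (DeltaN_le hs hc.le hT hTn).trans
    (add_le_add_right (le_mul_of_one_le_right error_nn hlog) _)

lemma tendsto_deltaMajorant (hs : s ≠ 0) (hc : 0 < c) :
    Tendsto (deltaMajorant s c) atTop (nhds (c * lambdaS s ^ 2)) := by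
  have hT := tendsto_cutoff_atTop hs hc
  have main := (((((tendsto_comparisonConst_atTop (1 / s)).comp hT).pow s).div_const
    (s.factorial : ℝ)).pow 2).const_mul c
  have error := (tendsto_cutoff_sq_mul_rpow_neg s c (ε := 1 / s / 2) (by positivity)).mul
    ((tendsto_overlapConst_atTop s (1 / s)).comp hT)
  have h := main.add error
  rw [zero_mul, add_zero, ← lambdaS_eq_Gamma_add_one_pow_div hs] at h
  exact h

end Asymptotics

/-- Lemma 5 (Lemma `delta`): `Δ_n ≤ (1+o(1)) c λ_s² log n` as `n → ∞`; in particular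
`limsup_{n → ∞} Δ_n / log n ≤ c λ_s²`. -/
theorem stmt_10 (s : ℕ) (hs : 2 ≤ s) (c : ℝ) (hc : 0 < c) :
    Filter.limsup (fun n : ℕ => DeltaN s c n / Real.log n) Filter.atTop ≤
      c * (lambdaS s) ^ 2 := by
  have hs₀ : s ≠ 0 := by lia
  have ratio_nonneg : ∀ n : ℕ, 0 ≤ DeltaN s c n / Real.log n := fun n =>
    div_nonneg (DeltaN_nonneg s c n) (Real.log_natCast_nonneg n)
  have majorant_tendsto := tendsto_deltaMajorant hs₀ hc
  calc limsup (fun n : ℕ => DeltaN s c n / Real.log n) atTop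
      ≤ limsup (deltaMajorant s c) atTop :=
        limsup_le_limsup (eventually_DeltaN_div_log_le hs₀ hc)
          (.of_frequently_ge (Frequently.of_forall ratio_nonneg))
          majorant_tendsto.isBoundedUnder_le
    _ = c * lambdaS s ^ 2 := majorant_tendsto.limsup_eq
end
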